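/- arXiv:2210.16153 — 5 statements merged into one kernel-verified Lean document; each statement's English description precedes it below -/
import Mathlib

section
/- Let q > 1 be a real number and λ a real number. Define the coefficient families of the skew-q-powers of μ(X,Y;λ) = X + (q^λ − 1)Y by μ^{[1]}_0(λ) = 1, μ^{[1]}_1(λ) = q^λ − 1, μ^{[1]}_u(λ) = 0 for u ≥ 2, and recursively μ^{[k+1]}_u(λ) = Σ_{j=0}^{u} q^{2jk} · μ^{[1]}_j(λ) · μ^{[k]}_{u−j}(λ − 2j) (the skew-q-product of the degree-1 family μ^{[1]} with the degree-k family μ^{[k]}). Then for every integer k ≥ 1 and every 0 ≤ u ≤ k, μ^{[k]}_u(λ) = [k;u] · γ(λ,u); that is, μ^{[k]}(X,Y;λ) = Σ_{u=0}^{k} [k;u] γ(λ,u) Y^u X^{k−u}. -/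
/-- The skew-q-nary Gaussian coefficient `[x;k]` for real `x`. -/
noncomputable def gaussQ (q x : ℝ) (k : ℕ) : ℝ :=
  ∏ i ∈ Finset.range k, (q ^ (2 * x) - q ^ (2 * (i : ℝ))) / (q ^ (2 * (k : ℝ)) - q ^ (2 * (i : ℝ)))

/-- The skew-q-nary Gamma function `γ(x,k)`. -/
noncomputable def skewGamma (q x : ℝ) (k : ℕ) : ℝ :=
  ∏ i ∈ Finset.range k, (q ^ x - q ^ (2 * (i : ℝ)))

/-- The coefficient family of `μ(X,Y;λ) = X + (q^λ − 1)Y`. -/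
noncomputable def mu1 (q : ℝ) : ℕ → ℝ → ℝ
  | 0 => fun _ => 1
  | 1 => fun lam => q ^ lam - 1
  | _ + 2 => fun _ => 0

/-- The coefficient families of the skew-q-powers `μ^{[k]}`, built recursively by the
skew-q-product of `μ^{[1]}` (degree 1) with `μ^{[k]}` (degree k). -/
noncomputable def muPow (q : ℝ) : ℕ → ℕ → ℝ → ℝ
  | 0 => fun u _ => if u = 0 then 1 else 0
  | 1 => fun u lam => mu1 q u lam
  | k + 2 => fun u lam =>
      ∑ j ∈ Finset.range (u + 1),
        q ^ (2 * j * (k + 1)) * mu1 q j lam * muPow q (k + 1) (u - j) (lam - 2 * (j : ℝ))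

/-- The product `∏_{i<k} (x − Q^i)`. -/
noncomputable def shiftedProd (Q x : ℝ) (k : ℕ) : ℝ :=
  ∏ i ∈ Finset.range k, (x - Q ^ i)

theorem shiftedProd_succ (Q x : ℝ) (k : ℕ) :
    shiftedProd Q x (k + 1) = shiftedProd Q x k * (x - Q ^ k) :=
  Finset.prod_range_succ _ _

theorem shiftedProd_mul_succ (Q x : ℝ) (k : ℕ) :
    shiftedProd Q (Q * x) (k + 1) = (Q * x - 1) * (Q ^ k * shiftedProd Q x k) := by
  have h : ∀ i ∈ Finset.range k, Q * x - Q ^ (i + 1) = Q * (x - Q ^ i) := fun i _ => by ring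
  rw [shiftedProd, Finset.prod_range_succ', Finset.prod_congr rfl h, Finset.prod_mul_distrib]
  simp [shiftedProd, mul_comm]

theorem shiftedProd_pow_self_pos {Q : ℝ} (hQ : 1 < Q) (k : ℕ) :
    0 < shiftedProd Q (Q ^ k) k :=
  Finset.prod_pos fun _ hi => sub_pos.2 (pow_lt_pow_right₀ hQ (Finset.mem_range.1 hi))

theorem rpow_two_mul_natCast {q : ℝ} (hq : 0 ≤ q) (n : ℕ) :
    q ^ (2 * (n : ℝ)) = (q ^ 2) ^ n := by
  rw [Real.rpow_mul hq, Real.rpow_natCast, Real.rpow_two]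

theorem skewGamma_eq_shiftedProd {q : ℝ} (hq : 0 ≤ q) (x : ℝ) (k : ℕ) :
    skewGamma q x k = shiftedProd (q ^ 2) (q ^ x) k := by
  simp only [skewGamma, shiftedProd, rpow_two_mul_natCast hq]

theorem gaussQ_natCast {q : ℝ} (hq : 0 ≤ q) (n k : ℕ) :
    gaussQ q n k =
      shiftedProd (q ^ 2) ((q ^ 2) ^ n) k / shiftedProd (q ^ 2) ((q ^ 2) ^ k) k := by
  simp only [gaussQ, shiftedProd, rpow_two_mul_natCast hq, Finset.prod_div_distrib]

theorem skewGamma_succ {q : ℝ} (hq : 0 < q) (x : ℝ) (k : ℕ) :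
    skewGamma q x (k + 1) = (q ^ x - 1) * ((q ^ 2) ^ k * skewGamma q (x - 2) k) := by
  have h : q ^ x = q ^ 2 * q ^ (x - 2) := by
    rw [Real.rpow_sub hq, Real.rpow_two]
    field_simp
  rw [skewGamma_eq_shiftedProd hq.le, skewGamma_eq_shiftedProd hq.le, h, shiftedProd_mul_succ]

/-- The `q`-Pascal rule for the skew-q-nary Gaussian coefficients. -/
theorem gaussQ_succ_succ {q : ℝ} (hq : 1 < q) (n k : ℕ) :
    (q ^ 2) ^ k * gaussQ q ((n + 1 : ℕ) : ℝ) (k + 1) =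
      (q ^ 2) ^ k * gaussQ q n (k + 1) + (q ^ 2) ^ n * gaussQ q n k := by
  have hq0 : 0 ≤ q := by linarith
  have hQ : 1 < q ^ 2 := one_lt_pow₀ hq two_ne_zero
  simp only [gaussQ_natCast hq0]
  generalize q ^ 2 = Q at hQ
  have hD := (shiftedProd_pow_self_pos hQ k).ne'
  have hk : Q ^ k * Q - 1 ≠ 0 := by
    rw [← pow_succ]
    exact (sub_pos.2 (one_lt_pow₀ hQ k.succ_ne_zero)).ne'
  have hQk : Q ^ k ≠ 0 := by positivity
  rw [pow_succ' Q n, pow_succ' Q k, shiftedProd_mul_succ, shiftedProd_mul_succ, shiftedProd_succ]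
  generalize Q ^ k = y at hD hk hQk ⊢
  field_simp
  ring

theorem muPow_zero_right (q : ℝ) (k : ℕ) (lam : ℝ) : muPow q k 0 lam = 1 := by
  induction k with
  | zero => simp [muPow]
  | succ k ih => cases k <;> simp_all [muPow, mu1]

theorem muPow_succ_succ (q : ℝ) (k u : ℕ) (lam : ℝ) :
    muPow q (k + 1) (u + 1) lam =
      muPow q k (u + 1) lam + (q ^ 2) ^ k * (q ^ lam - 1) * muPow q k u (lam - 2) := by
  cases k with
  | zero => cases u <;> simp [muPow, mu1]
  | succ k =>
    rw [muPow]
    beta_reduce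
    rw [Finset.sum_range_succ', Finset.sum_range_succ']
    simp [mu1, pow_mul, add_comm]

/-- The coefficients of the skew-q-powers of `μ`, with no restriction on the indices. -/
theorem muPow_eq_gaussQ_mul_skewGamma {q : ℝ} (hq : 1 < q) (k u : ℕ) (lam : ℝ) :
    muPow q k u lam = gaussQ q k u * skewGamma q lam u := by
  induction k generalizing u lam with
  | zero =>
    cases u with
    | zero => simp [muPow, gaussQ, skewGamma]
    | succ u => simp [muPow, gaussQ, Finset.prod_range_succ']
  | succ k ih =>
    cases u with
    | zero => simp [muPow_zero_right, gaussQ, skewGamma]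
    | succ u =>
      rw [muPow_succ_succ, ih, ih, skewGamma_succ (by linarith)]
      linear_combination
        -((q ^ lam - 1) * skewGamma q (lam - 2) u) * gaussQ_succ_succ hq k u

theorem stmt0 (q : ℝ) (hq : 1 < q) (lam : ℝ) (k : ℕ) (hk : 1 ≤ k) (u : ℕ) (hu : u ≤ k) :
    muPow q k u lam = gaussQ q (k : ℝ) u * skewGamma q lam u :=
  muPow_eq_gaussQ_mul_skewGamma hq k u lam
end

section
/- Let q > 1 be a real number, λ a real number, and φ ≤ k natural numbers. For j ∈ ℕ define the two-variable functions f_j(X,Y) = Σ_{u=0}^{j} [j;u] γ(λ,u) Y^u X^{j−u} and g_j(X,Y) = Σ_{u=0}^{j} (−1)^u q^{u(u−1)} [j;u] Y^u X^{j−u}. Then for every Y ∈ ℝ and every X ≠ 0, the φ-fold skew-q-derivative with respect to X satisfies (f_k(·,Y))^{(φ)}(X) = β(k,φ) · f_{k−φ}(X,Y) and (g_k(·,Y))^{(φ)}(X) = β(k,φ) · g_{k−φ}(X,Y). -/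
/-- The skew-q-nary Beta function `β(x,k)`. -/
noncomputable def betaQ (q x : ℝ) (k : ℕ) : ℝ :=
  ∏ i ∈ Finset.range k, (q ^ (2 * (x - (i : ℝ))) - 1) / (q ^ 2 - 1)

/-- The skew-q-derivative operator. -/
noncomputable def qDeriv (q : ℝ) (h : ℝ → ℝ) : ℝ → ℝ :=
  fun X => (h (q ^ 2 * X) - h X) / ((q ^ 2 - 1) * X)

/-- Pascal-type absorption identity relating `[x+1;u]` and `[x;u]`. -/
theorem gaussQ_add_one_mul {q : ℝ} (hq : 0 < q) (x : ℝ) (u : ℕ) :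
    gaussQ q (x + 1) u * (q ^ (2 * (x + 1)) - q ^ (2 * u)) =
      q ^ (2 * u) * (q ^ (2 * (x + 1)) - 1) * gaussQ q x u := by
  have numerators : ∀ v : ℕ,
      (∏ i ∈ Finset.range v, (q ^ (2 * (x + 1)) - q ^ (2 * (i : ℝ)))) *
          (q ^ (2 * (x + 1)) - q ^ (2 * v)) =
        q ^ (2 * v) * (q ^ (2 * (x + 1)) - 1) *
          ∏ i ∈ Finset.range v, (q ^ (2 * x) - q ^ (2 * (i : ℝ))) := by
    intro v
    induction v with
    | zero => simp
    | succ v ih =>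
      have hx : q ^ (2 * (x + 1)) = q ^ (2 * x) * q ^ 2 := by
        rw [mul_add, Real.rpow_add hq]
        norm_num
      have hv : q ^ (2 * (v : ℝ)) = q ^ (2 * v) := by
        exact_mod_cast Real.rpow_natCast q (2 * v)
      rw [Finset.prod_range_succ, Finset.prod_range_succ, hv]
      rw [hx] at ih ⊢
      linear_combination q ^ 2 * (q ^ (2 * x) - q ^ (2 * v)) * ih
  unfold gaussQ
  rw [Finset.prod_div_distrib, Finset.prod_div_distrib, div_mul_eq_mul_div, numerators,
    mul_div_assoc]

/-- The `q`-derivative lowers the index of the homogeneous sum attached to a sequence `c`. -/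
theorem qDeriv_sum_gaussQ {q : ℝ} (hq : 1 < q) (c : ℕ → ℝ) (n : ℕ) {X : ℝ} (hX : X ≠ 0) :
    qDeriv q (fun Z => ∑ u ∈ Finset.range (n + 1 + 1),
        gaussQ q ((n + 1 : ℕ) : ℝ) u * c u * Z ^ (n + 1 - u)) X =
      (q ^ (2 * (n + 1)) - 1) / (q ^ 2 - 1) *
        ∑ u ∈ Finset.range (n + 1), gaussQ q (n : ℝ) u * c u * X ^ (n - u) := by
  have hq0 : 0 < q := by linarith
  have hq2 : q ^ 2 - 1 ≠ 0 := by nlinarith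
  unfold qDeriv
  rw [div_eq_iff (mul_ne_zero hq2 hX), ← Finset.sum_sub_distrib, Finset.sum_range_succ]
  have hcancel : ∀ S : ℝ, (q ^ (2 * (n + 1)) - 1) / (q ^ 2 - 1) * S * ((q ^ 2 - 1) * X) =
      S * ((q ^ (2 * (n + 1)) - 1) * X) := by
    intro S
    field_simp
  rw [hcancel, Finset.sum_mul]
  simp only [Nat.sub_self, pow_zero, sub_self, add_zero]
  refine Finset.sum_congr rfl fun u hu => ?_
  obtain ⟨m, rfl⟩ := Nat.exists_eq_add_of_le (Finset.mem_range_succ_iff.mp hu)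
  have key := gaussQ_add_one_mul hq0 ((u + m : ℕ) : ℝ) u
  have hpow : q ^ (2 * (((u + m : ℕ) : ℝ) + 1)) = q ^ (2 * u) * q ^ (2 * (m + 1)) := by
    rw [← pow_add, ← Real.rpow_natCast]
    congr 1
    push_cast
    ring
  have hu0 : q ^ (2 * u) ≠ 0 := by positivity
  have absorb : gaussQ q (((u + m : ℕ) : ℝ) + 1) u * (q ^ (2 * (m + 1)) - 1) =
      (q ^ (2 * (u + m + 1)) - 1) * gaussQ q ((u + m : ℕ) : ℝ) u := by
    apply mul_left_cancel₀ hu0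
    rw [hpow] at key
    linear_combination key
  rw [show u + m + 1 - u = m + 1 by omega, show u + m - u = m by omega, Nat.cast_succ, mul_pow,
    ← pow_mul]
  linear_combination c u * X ^ (m + 1) * absorb

/-- Iterated `q`-derivatives of the homogeneous sum attached to a sequence `c`. -/
theorem iterate_qDeriv_sum_gaussQ {q : ℝ} (hq : 1 < q) (c : ℕ → ℝ) {φ k : ℕ} (hφ : φ ≤ k)
    {X : ℝ} (hX : X ≠ 0) :
    (qDeriv q)^[φ] (fun Z => ∑ u ∈ Finset.range (k + 1),
        gaussQ q (k : ℝ) u * c u * Z ^ (k - u)) X =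
      betaQ q (k : ℝ) φ * ∑ u ∈ Finset.range ((k - φ) + 1),
        gaussQ q ((k - φ : ℕ) : ℝ) u * c u * X ^ ((k - φ) - u) := by
  induction φ generalizing X with
  | zero => simp [betaQ]
  | succ φ ih =>
    have hq0 : q ^ 2 ≠ 0 := by positivity
    obtain ⟨n, rfl⟩ := Nat.exists_eq_add_of_le hφ
    have step := qDeriv_sum_gaussQ hq c n hX
    have hβ : betaQ q ((φ + 1 + n : ℕ) : ℝ) (φ + 1) =
        betaQ q ((φ + 1 + n : ℕ) : ℝ) φ * ((q ^ (2 * (n + 1)) - 1) / (q ^ 2 - 1)) := by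
      unfold betaQ
      rw [Finset.prod_range_succ, ← Real.rpow_natCast q (2 * (n + 1))]
      congr 4
      push_cast
      ring
    rw [Function.iterate_succ_apply', qDeriv, ih (by omega) hX,
      ih (by omega) (mul_ne_zero hq0 hX), hβ, show φ + 1 + n - φ = n + 1 by omega,
      show φ + 1 + n - (φ + 1) = n by omega, mul_assoc, ← step, qDeriv, ← mul_sub, mul_div_assoc]

theorem stmt5 (q : ℝ) (hq : 1 < q) (lam : ℝ) (φ k : ℕ) (hφ : φ ≤ k) (Y X : ℝ) (hX : X ≠ 0) :
    ((qDeriv q)^[φ] (fun Z => ∑ u ∈ Finset.range (k + 1),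
          gaussQ q (k : ℝ) u * skewGamma q lam u * Y ^ u * Z ^ (k - u))) X
        = betaQ q (k : ℝ) φ * ∑ u ∈ Finset.range ((k - φ) + 1),
            gaussQ q ((k - φ : ℕ) : ℝ) u * skewGamma q lam u * Y ^ u * X ^ ((k - φ) - u)
    ∧ ((qDeriv q)^[φ] (fun Z => ∑ u ∈ Finset.range (k + 1),
          (-1 : ℝ) ^ u * q ^ (u * (u - 1)) * gaussQ q (k : ℝ) u * Y ^ u * Z ^ (k - u))) X
        = betaQ q (k : ℝ) φ * ∑ u ∈ Finset.range ((k - φ) + 1),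
            (-1 : ℝ) ^ u * q ^ (u * (u - 1)) * gaussQ q ((k - φ : ℕ) : ℝ) u * Y ^ u *
              X ^ ((k - φ) - u) := by
  constructor
  · simpa only [mul_assoc] using
      iterate_qDeriv_sum_gaussQ hq (fun u => skewGamma q lam u * Y ^ u) hφ hX
  · have h := iterate_qDeriv_sum_gaussQ hq
      (fun u => (-1 : ℝ) ^ u * q ^ (u * (u - 1)) * Y ^ u) hφ hX
    have reorder : ∀ x Z : ℝ, ∀ u m : ℕ,
        (-1 : ℝ) ^ u * q ^ (u * (u - 1)) * gaussQ q x u * Y ^ u * Z ^ m =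
          gaussQ q x u * ((-1 : ℝ) ^ u * q ^ (u * (u - 1)) * Y ^ u) * Z ^ m := by
      intro x Z u m
      ring
    simpa only [reorder] using h
end

section
/- Let q > 1 be real, s a natural number, g_0, …, g_s real numbers, X a fixed real number, and φ ≤ s a natural number. Then for every Y ≠ 0, the φ-fold skew-q^{-1}-derivative with respect to Y satisfies (Y ↦ Σ_{i=0}^{s} g_i Y^i X^{s−i})^{{φ}}(Y) = Σ_{i=φ}^{s} g_i q^{2(φ(1−i)+σ_φ)} β(i,φ) Y^{i−φ} X^{s−i}. In particular, for φ ≤ ℓ, (Y ↦ Y^ℓ)^{{φ}}(Y) = q^{2(φ(1−ℓ)+σ_φ)} β(ℓ,φ) Y^{ℓ−φ}. -/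
/-- The skew-q⁻¹-derivative operator. -/
noncomputable def qInvDeriv (q : ℝ) (h : ℝ → ℝ) : ℝ → ℝ :=
  fun Y => (h ((q ^ 2)⁻¹ * Y) - h Y) / (((q ^ 2)⁻¹ - 1) * Y)

/-- Iterated skew-q⁻¹-derivatives are linear. -/
theorem iterate_qInvDeriv_sum {ι : Type*} (q : ℝ) (t : Finset ι) (c : ι → ℝ) (f : ι → ℝ → ℝ)
    (n : ℕ) :
    (qInvDeriv q)^[n] (fun Z => ∑ i ∈ t, c i * f i Z)
      = fun Y => ∑ i ∈ t, c i * (qInvDeriv q)^[n] (f i) Y := by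
  induction n with
  | zero => rfl
  | succ n ih =>
    funext Y
    simp only [Function.iterate_succ_apply', ih]
    simp only [qInvDeriv, ← Finset.sum_sub_distrib, Finset.sum_div]
    exact Finset.sum_congr rfl fun i _ => by ring

theorem betaQ_succ (q x : ℝ) (k : ℕ) :
    betaQ q x (k + 1) = betaQ q x k * ((q ^ (2 * (x - (k : ℝ))) - 1) / (q ^ 2 - 1)) :=
  Finset.prod_range_succ _ _

theorem betaQ_natCast_eq_zero (q : ℝ) {l k : ℕ} (h : l < k) : betaQ q (l : ℝ) k = 0 :=
  Finset.prod_eq_zero (Finset.mem_range.2 h) (by simp)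

/-- The iterated skew-q⁻¹-derivative of a monomial; both sides vanish when `l < n`. -/
theorem iterate_qInvDeriv_pow {q : ℝ} (hq : 1 < q) (l n : ℕ) {Y : ℝ} (hY : Y ≠ 0) :
    (qInvDeriv q)^[n] (fun Z => Z ^ l) Y
      = q ^ (2 * ((n : ℝ) * (1 - (l : ℝ)) + (n : ℝ) * ((n : ℝ) - 1) / 2)) *
          betaQ q (l : ℝ) n * Y ^ (l - n) := by
  have hq0 : 0 < q := one_pos.trans hq
  have hq1 : q ^ 2 - 1 ≠ 0 := by nlinarith
  induction n generalizing Y with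
  | zero => simp [betaQ]
  | succ n ih =>
    have hqY : (q ^ 2)⁻¹ * Y ≠ 0 := by positivity
    rw [Function.iterate_succ_apply', qInvDeriv, ih hqY, ih hY]
    rcases le_or_gt l n with h | h
    · rw [betaQ_natCast_eq_zero q (Nat.lt_succ_of_le h), Nat.sub_eq_zero_of_le h]
      simp
    · obtain ⟨m, rfl⟩ := Nat.exists_eq_add_of_lt h
      have hexp : q ^ (2 * (((n + 1 : ℕ) : ℝ) * (1 - ((n + m + 1 : ℕ) : ℝ))
            + ((n + 1 : ℕ) : ℝ) * (((n + 1 : ℕ) : ℝ) - 1) / 2))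
          = q ^ (2 * ((n : ℝ) * (1 - ((n + m + 1 : ℕ) : ℝ)) + (n : ℝ) * ((n : ℝ) - 1) / 2))
            * ((q ^ 2) ^ m)⁻¹ := by
        rw [← pow_mul, ← Real.rpow_natCast q (2 * m), ← Real.rpow_neg hq0.le,
          ← Real.rpow_add hq0]
        congr 1
        push_cast
        ring
      have hfactor : q ^ (2 * (((n + m + 1 : ℕ) : ℝ) - (n : ℝ))) = (q ^ 2) ^ (m + 1) := by
        rw [← pow_mul, ← Real.rpow_natCast q (2 * (m + 1))]
        congr 1
        push_cast
        ring
      rw [betaQ_succ, hexp, hfactor, show n + m + 1 - n = m + 1 by omega,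
        show n + m + 1 - (n + 1) = m by omega]
      generalize q ^ (2 * ((n : ℝ) * (1 - ((n + m + 1 : ℕ) : ℝ)) + (n : ℝ) * ((n : ℝ) - 1) / 2))
        = A
      have hp : q ^ 2 ≠ 0 := by positivity
      generalize q ^ 2 = p at *
      have hp1 : 1 - p ≠ 0 := fun h => hq1 (by linarith)
      have hden : p⁻¹ - 1 = (1 - p) / p := by field_simp
      rw [hden, mul_pow, inv_pow]
      field_simp
      ring

theorem stmt7 (q : ℝ) (hq : 1 < q) (s : ℕ) (g : ℕ → ℝ) (X : ℝ) (φ : ℕ) (hφ : φ ≤ s) :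
    (∀ Y : ℝ, Y ≠ 0 →
      ((qInvDeriv q)^[φ] (fun Z => ∑ i ∈ Finset.range (s + 1), g i * Z ^ i * X ^ (s - i))) Y
        = ∑ i ∈ Finset.Icc φ s,
            g i * q ^ (2 * ((φ : ℝ) * (1 - (i : ℝ)) + (φ : ℝ) * ((φ : ℝ) - 1) / 2)) *
              betaQ q (i : ℝ) φ * Y ^ (i - φ) * X ^ (s - i))
    ∧ (∀ ℓ : ℕ, φ ≤ ℓ → ∀ Y : ℝ, Y ≠ 0 →
        ((qInvDeriv q)^[φ] (fun Z => Z ^ ℓ)) Y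
          = q ^ (2 * ((φ : ℝ) * (1 - (ℓ : ℝ)) + (φ : ℝ) * ((φ : ℝ) - 1) / 2)) *
              betaQ q (ℓ : ℝ) φ * Y ^ (ℓ - φ)) := by
  refine ⟨fun Y hY => ?_, fun ℓ _ Y hY => iterate_qInvDeriv_pow hq ℓ φ hY⟩
  have hcomm : (fun Z : ℝ => ∑ i ∈ Finset.range (s + 1), g i * Z ^ i * X ^ (s - i))
      = fun Z => ∑ i ∈ Finset.range (s + 1), (g i * X ^ (s - i)) * Z ^ i :=
    funext fun Z => Finset.sum_congr rfl fun i _ => by ring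
  rw [hcomm, iterate_qInvDeriv_sum q _ _ (fun i Z => Z ^ i)]
  symm
  have hsub : Finset.Icc φ s ⊆ Finset.range (s + 1) := fun i hi => by
    simp only [Finset.mem_Icc, Finset.mem_range] at hi ⊢
    omega
  refine Finset.sum_subset_zero_on_sdiff hsub (fun i hi => ?_) fun i _ => ?_
  · simp only [Finset.mem_sdiff, Finset.mem_range, Finset.mem_Icc] at hi
    rw [iterate_qInvDeriv_pow hq i φ hY, betaQ_natCast_eq_zero q (by omega)]
    ring
  · rw [iterate_qInvDeriv_pow hq i φ hY]
    ring
end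

section
/- (Leibniz rule for the skew-q^{-1}-derivative.) Let q > 1 be real, r, s naturals, and f, g : ℕ → ℝ → ℝ coefficient families with f_i = 0 for i > r and g_i = 0 for i > s. For a degree-d family h define its ℓ-th skew-q^{-1}-derivative family (of degree d−ℓ) by h^{{ℓ}}_j(λ) = h_{j+ℓ}(λ) q^{2(ℓ(1−(j+ℓ))+σ_ℓ)} β(j+ℓ, ℓ). Then for every natural φ, every real λ, every X ∈ ℝ and every Y ≠ 0: the φ-fold skew-q^{-1}-derivative in Y of the function Y ↦ Σ_{u=0}^{r+s} (Σ_{i=0}^{u} q^{2is} f_i(λ) g_{u−i}(λ−2i)) Y^u X^{r+s−u} equals Σ_{ℓ=0}^{φ} [φ;ℓ] q^{2ℓ(s−φ+ℓ)} Σ_{u=0}^{r+s−φ} (Σ_{i=0}^{u} q^{2i(s−(φ−ℓ))} f^{{ℓ}}_i(λ) g^{{φ−ℓ}}_{u−i}(λ−2ℓ−2i)) Y^u X^{r+s−φ−u}, where f^{{ℓ}} has degree r−ℓ and g^{{φ−ℓ}} has degree s−(φ−ℓ). -/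
/-- The `ℓ`-th skew-q⁻¹-derivative of a coefficient family:
`h^{{ℓ}}_j(λ) = h_{j+ℓ}(λ) q^{2(ℓ(1−(j+ℓ))+σ_ℓ)} β(j+ℓ, ℓ)`. -/
noncomputable def invDerivFam (q : ℝ) (h : ℕ → ℝ → ℝ) (ℓ : ℕ) : ℕ → ℝ → ℝ :=
  fun j lam => h (j + ℓ) lam *
    q ^ (2 * ((ℓ : ℝ) * (1 - ((j : ℝ) + (ℓ : ℝ))) + (ℓ : ℝ) * ((ℓ : ℝ) - 1) / 2)) *
    betaQ q ((j : ℝ) + (ℓ : ℝ)) ℓ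

/-- The factor `∏_{i<k} (A q^{2i} − 1)/(q⁻² − 1)`. For `A = q^{-2u}` it is the coefficient
acquired by `Y^u` under the `k`-fold skew-q⁻¹-derivative. -/
noncomputable def invDerivCoeff (q A : ℝ) (k : ℕ) : ℝ :=
  ∏ i ∈ Finset.range k, (A * (q ^ 2) ^ i - 1) / ((q ^ 2)⁻¹ - 1)

lemma invDerivCoeff_succ (q A : ℝ) (k : ℕ) :
    invDerivCoeff q A (k + 1) =
      invDerivCoeff q A k * ((A * (q ^ 2) ^ k - 1) / ((q ^ 2)⁻¹ - 1)) :=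
  Finset.prod_range_succ _ _

lemma invDerivCoeff_eq_zero {q : ℝ} (hq : 1 < q) {u k : ℕ} (h : u < k) :
    invDerivCoeff q (((q ^ 2)⁻¹) ^ u) k = 0 := by
  refine Finset.prod_eq_zero (Finset.mem_range.2 h) ?_
  have : (q ^ 2) ^ u ≠ 0 := by positivity
  rw [inv_pow, inv_mul_cancel₀ this, sub_self, zero_div]

lemma qInvDeriv_iterate_sum {q : ℝ} (hq : 1 < q) (N : ℕ) (c : ℕ → ℝ) (φ : ℕ) (Y : ℝ)
    (hY : Y ≠ 0) :
    (qInvDeriv q)^[φ] (fun Z => ∑ u ∈ Finset.range N, c u * Z ^ u) Y =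
      ∑ u ∈ Finset.range N, c u * invDerivCoeff q (((q ^ 2)⁻¹) ^ u) φ * Y ^ (u - φ) := by
  have hp : q ^ 2 ≠ 0 := by positivity
  have ht : (q ^ 2)⁻¹ - 1 ≠ 0 :=
    (sub_neg.2 (inv_lt_one_of_one_lt₀ (one_lt_pow₀ hq two_ne_zero))).ne
  induction φ generalizing Y with
  | zero => simp [invDerivCoeff]
  | succ φ ih =>
    rw [Function.iterate_succ_apply', qInvDeriv, ih _ (mul_ne_zero (inv_ne_zero hp) hY),
      ih _ hY, ← Finset.sum_sub_distrib, Finset.sum_div]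
    refine Finset.sum_congr rfl fun u _ => ?_
    rcases lt_trichotomy u φ with h | rfl | h
    · rw [invDerivCoeff_eq_zero hq h, invDerivCoeff_eq_zero hq (h.trans (Nat.lt_succ_self φ))]
      simp
    · rw [invDerivCoeff_eq_zero hq (Nat.lt_succ_self u)]
      simp
    · obtain ⟨m, rfl⟩ := Nat.exists_eq_add_of_lt h
      have h₁ : φ + m + 1 - φ = m + 1 := by omega
      have h₂ : φ + m + 1 - (φ + 1) = m := by omega
      have h₃ : ((q ^ 2)⁻¹) ^ (φ + m + 1) * (q ^ 2) ^ φ = ((q ^ 2)⁻¹) ^ (m + 1) := by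
        rw [add_assoc, pow_add, mul_right_comm, ← mul_pow, inv_mul_cancel₀ hp, one_pow, one_mul]
      rw [invDerivCoeff_succ, h₁, h₂, h₃, mul_pow]
      generalize (q ^ 2)⁻¹ = t at ht
      field_simp
      ring

lemma gaussQ_eq (q : ℝ) (n k : ℕ) :
    gaussQ q n k = ∏ i ∈ Finset.range k,
      ((q ^ 2) ^ n - (q ^ 2) ^ i) / ((q ^ 2) ^ k - (q ^ 2) ^ i) := by
  have h (m : ℕ) : q ^ (2 * (m : ℝ)) = (q ^ 2) ^ m := by
    rw [← pow_mul, ← Real.rpow_natCast]; push_cast; rfl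
  simp only [gaussQ, h]

lemma gaussQ_zero_right (q x : ℝ) : gaussQ q x 0 = 1 := by simp [gaussQ]

lemma gaussQ_eq_zero (q : ℝ) (n : ℕ) : gaussQ q n (n + 1) = 0 :=
  Finset.prod_eq_zero (Finset.self_mem_range_succ n) (by simp)

lemma gaussQ_pascal {q : ℝ} (hq : 1 < q) (n k : ℕ) :
    gaussQ q (n + 1 : ℕ) (k + 1) = (q ^ 2) ^ (k + 1) * gaussQ q n (k + 1) + gaussQ q n k := by
  have hp : 1 < q ^ 2 := one_lt_pow₀ hq two_ne_zero
  simp only [gaussQ_eq]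
  generalize q ^ 2 = p at hp
  have hden : ∏ i ∈ Finset.range k, (p ^ k - p ^ i) ≠ 0 :=
    Finset.prod_ne_zero_iff.2 fun i hi =>
      (sub_pos.2 (pow_lt_pow_right₀ hp (Finset.mem_range.1 hi))).ne'
  have hk : p ^ (k + 1) - 1 ≠ 0 := (sub_pos.2 (one_lt_pow₀ hp k.succ_ne_zero)).ne'
  have hpk : p ^ k ≠ 0 := by positivity
  have shift (m : ℕ) : ∏ i ∈ Finset.range (k + 1), (p ^ (m + 1) - p ^ i) =
      (p ^ (m + 1) - 1) * (p ^ k * ∏ i ∈ Finset.range k, (p ^ m - p ^ i)) := by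
    have : p ^ k = ∏ _i ∈ Finset.range k, p := by simp
    rw [Finset.prod_range_succ', pow_zero, mul_comm, this, ← Finset.prod_mul_distrib]
    congr 1
    exact Finset.prod_congr rfl fun i _ => by ring
  simp only [Finset.prod_div_distrib]
  rw [shift, shift, Finset.prod_range_succ]
  field_simp
  ring

lemma invDerivCoeff_mul {q : ℝ} (hq : 1 < q) (A B : ℝ) (n : ℕ) :
    invDerivCoeff q (A * B) n = ∑ l ∈ Finset.range (n + 1),
      gaussQ q n l * A ^ (n - l) * invDerivCoeff q A l * invDerivCoeff q B (n - l) := by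
  induction n with
  | zero => simp [invDerivCoeff, gaussQ]
  | succ n ih =>
    have split : invDerivCoeff q (A * B) (n + 1) = ∑ l ∈ Finset.range (n + 1),
        ((q ^ 2) ^ l * gaussQ q n l * A ^ (n + 1 - l) * invDerivCoeff q A l *
            invDerivCoeff q B (n + 1 - l) +
          gaussQ q n l * A ^ (n - l) * invDerivCoeff q A (l + 1) *
            invDerivCoeff q B (n - l)) := by
      rw [invDerivCoeff_succ, ih, Finset.sum_mul]
      refine Finset.sum_congr rfl fun l hl => ?_
      obtain ⟨m, rfl⟩ := Nat.exists_eq_add_of_le (Nat.lt_succ_iff.1 (Finset.mem_range.1 hl))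
      have h₁ : l + m - l = m := by omega
      have h₂ : l + m + 1 - l = m + 1 := by omega
      rw [h₁, h₂, invDerivCoeff_succ, invDerivCoeff_succ]
      ring
    rw [split, Finset.sum_add_distrib, Finset.sum_range_succ' _ (n + 1)]
    simp only [gaussQ_pascal hq, add_mul, Finset.sum_add_distrib, Nat.add_sub_add_right]
    have h₀ : ∑ l ∈ Finset.range (n + 1), (q ^ 2) ^ l * gaussQ q n l * A ^ (n + 1 - l) *
          invDerivCoeff q A l * invDerivCoeff q B (n + 1 - l) =
        ∑ l ∈ Finset.range (n + 1 + 1), (q ^ 2) ^ l * gaussQ q n l * A ^ (n + 1 - l) *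
          invDerivCoeff q A l * invDerivCoeff q B (n + 1 - l) := by
      rw [Finset.sum_range_succ _ (n + 1), gaussQ_eq_zero]
      ring
    rw [h₀, Finset.sum_range_succ' _ (n + 1)]
    simp only [gaussQ_zero_right, pow_zero, one_mul, Nat.add_sub_add_right]
    ring

lemma rpow_mul_betaQ {q : ℝ} (hq : 1 < q) (u k : ℕ) :
    q ^ (2 * ((k : ℝ) * (1 - (u : ℝ)) + (k : ℝ) * ((k : ℝ) - 1) / 2)) * betaQ q u k =
      invDerivCoeff q (((q ^ 2)⁻¹) ^ u) k := by
  have hq0 : 0 < q := by linarith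
  have hp : q ^ 2 - 1 ≠ 0 := (sub_pos.2 (one_lt_pow₀ hq two_ne_zero)).ne'
  have hp' : (q ^ 2)⁻¹ - 1 ≠ 0 :=
    (sub_neg.2 (inv_lt_one_of_one_lt₀ (one_lt_pow₀ hq two_ne_zero))).ne
  induction k with
  | zero => simp [betaQ, invDerivCoeff]
  | succ k ih =>
    have hW : ((q ^ 2)⁻¹) ^ u * (q ^ 2) ^ k = (q ^ (2 * ((u : ℝ) - k)))⁻¹ := by
      rw [← Real.rpow_neg hq0.le, inv_pow, ← pow_mul, ← pow_mul, ← Real.rpow_natCast,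
        ← Real.rpow_natCast, ← Real.rpow_neg hq0.le, ← Real.rpow_add hq0]
      push_cast
      ring_nf
    have hexp : q ^ (2 * (((k + 1 : ℕ) : ℝ) * (1 - (u : ℝ)) +
          ((k + 1 : ℕ) : ℝ) * (((k + 1 : ℕ) : ℝ) - 1) / 2)) =
        q ^ (2 * ((k : ℝ) * (1 - (u : ℝ)) + (k : ℝ) * ((k : ℝ) - 1) / 2)) *
          (q ^ 2 * (q ^ (2 * ((u : ℝ) - k)))⁻¹) := by
      rw [← Real.rpow_neg hq0.le, ← Real.rpow_natCast q 2, ← Real.rpow_add hq0,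
        ← Real.rpow_add hq0]
      push_cast
      ring_nf
    have hpos : q ^ (2 * ((u : ℝ) - k)) ≠ 0 := (Real.rpow_pos_of_pos hq0 _).ne'
    rw [invDerivCoeff_succ, ← ih, hW, hexp, betaQ, Finset.prod_range_succ, ← betaQ]
    generalize q ^ (2 * ((u : ℝ) - k)) = W at hpos
    have key : q ^ 2 * W⁻¹ * ((W - 1) / (q ^ 2 - 1)) = (W⁻¹ - 1) / ((q ^ 2)⁻¹ - 1) := by
      rw [eq_div_iff hp']
      field_simp
      ring
    rw [← key]
    ring

lemma invDerivFam_eq {q : ℝ} (hq : 1 < q) (h : ℕ → ℝ → ℝ) (k j : ℕ) (lam : ℝ) :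
    invDerivFam q h k j lam = h (j + k) lam * invDerivCoeff q (((q ^ 2)⁻¹) ^ (j + k)) k := by
  rw [← rpow_mul_betaQ hq, invDerivFam, Nat.cast_add, mul_assoc]

lemma rpow_mul_rpow_eq {q : ℝ} (hq : 0 < q) (s i l m : ℕ) :
    q ^ (2 * (l : ℝ) * ((s : ℝ) - ((l + m : ℕ) : ℝ) + (l : ℝ))) *
        q ^ (2 * (i : ℝ) * ((s : ℝ) - (((l + m : ℕ) : ℝ) - (l : ℝ)))) =
      q ^ (2 * (l + i) * s) * (((q ^ 2)⁻¹) ^ (l + i)) ^ m := by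
  rw [inv_pow, inv_pow, ← pow_mul, ← pow_mul, ← Real.rpow_natCast, ← Real.rpow_natCast,
    ← Real.rpow_neg hq.le, ← Real.rpow_add hq, ← Real.rpow_add hq]
  push_cast
  ring_nf

/-- Leibniz rule for the coefficient of `Y^u`. -/
lemma skewProduct_coeff_leibniz {q : ℝ} (hq : 1 < q) (s : ℕ) (f g : ℕ → ℝ → ℝ)
    (φ u : ℕ) (lam : ℝ) :
    (∑ i ∈ Finset.range (u + φ + 1),
        q ^ (2 * i * s) * f i lam * g (u + φ - i) (lam - 2 * (i : ℝ))) *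
      invDerivCoeff q (((q ^ 2)⁻¹) ^ (u + φ)) φ =
    ∑ l ∈ Finset.range (φ + 1),
      gaussQ q (φ : ℝ) l * q ^ (2 * (l : ℝ) * ((s : ℝ) - (φ : ℝ) + (l : ℝ))) *
        ∑ i ∈ Finset.range (u + 1),
          q ^ (2 * (i : ℝ) * ((s : ℝ) - ((φ : ℝ) - (l : ℝ)))) *
            invDerivFam q f l i lam *
            invDerivFam q g (φ - l) (u - i) (lam - 2 * (l : ℝ) - 2 * (i : ℝ)) := by
  have hq0 : 0 < q := by linarith
  have expand : (∑ i ∈ Finset.range (u + φ + 1),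
        q ^ (2 * i * s) * f i lam * g (u + φ - i) (lam - 2 * (i : ℝ))) *
      invDerivCoeff q (((q ^ 2)⁻¹) ^ (u + φ)) φ =
      ∑ l ∈ Finset.range (φ + 1), ∑ i ∈ Finset.range (u + φ + 1),
        q ^ (2 * i * s) * f i lam * g (u + φ - i) (lam - 2 * (i : ℝ)) *
          (gaussQ q φ l * (((q ^ 2)⁻¹) ^ i) ^ (φ - l) * invDerivCoeff q (((q ^ 2)⁻¹) ^ i) l *
            invDerivCoeff q (((q ^ 2)⁻¹) ^ (u + φ - i)) (φ - l)) := by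
    rw [Finset.sum_comm, Finset.sum_mul]
    refine Finset.sum_congr rfl fun i hi => ?_
    rw [← Finset.mul_sum, ← invDerivCoeff_mul hq, ← pow_add,
      Nat.add_sub_cancel' (Nat.lt_succ_iff.1 (Finset.mem_range.1 hi))]
  rw [expand]
  refine Finset.sum_congr rfl fun l hl => ?_
  obtain ⟨m, rfl⟩ := Nat.exists_eq_add_of_le (Nat.lt_succ_iff.1 (Finset.mem_range.1 hl))
  have hm : l + m - l = m := by omega
  have hr : u + (l + m) + 1 = l + (u + 1) + m := by omega
  rw [hm, hr, Finset.sum_range_add, Finset.sum_range_add, Finset.sum_eq_zero, zero_add,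
    Finset.sum_eq_zero (s := Finset.range m), add_zero, Finset.mul_sum]
  · refine Finset.sum_congr rfl fun i hi => ?_
    have hi' : u - i + m = u + (l + m) - (l + i) := by
      have := Finset.mem_range.1 hi
      omega
    have hlam : lam - 2 * (l : ℝ) - 2 * (i : ℝ) = lam - 2 * ((l + i : ℕ) : ℝ) := by
      push_cast
      ring
    rw [invDerivFam_eq hq, invDerivFam_eq hq, hi', hlam, add_comm i l]
    linear_combination (-(gaussQ q ((l + m : ℕ) : ℝ) l * (f (l + i) lam *
      invDerivCoeff q (((q ^ 2)⁻¹) ^ (l + i)) l) * (g (u + (l + m) - (l + i))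
        (lam - 2 * ((l + i : ℕ) : ℝ)) *
      invDerivCoeff q (((q ^ 2)⁻¹) ^ (u + (l + m) - (l + i))) m))) *
        rpow_mul_rpow_eq hq0 s i l m
  · intro i hi
    have := Finset.mem_range.1 hi
    rw [invDerivCoeff_eq_zero hq (show u + (l + m) - (l + (u + 1) + i) < m by omega)]
    simp
  · intro i hi
    rw [invDerivCoeff_eq_zero hq (Finset.mem_range.1 hi)]
    simp

/-- Leibniz rule for the skew-q⁻¹-derivative of a skew-q-product. -/
theorem stmt9 (q : ℝ) (hq : 1 < q) (r s : ℕ) (f g : ℕ → ℝ → ℝ)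
    (hf : ∀ i, r < i → ∀ lam, f i lam = 0) (hg : ∀ i, s < i → ∀ lam, g i lam = 0)
    (φ : ℕ) (lam X Y : ℝ) (hY : Y ≠ 0) :
    ((qInvDeriv q)^[φ] (fun Z => ∑ u ∈ Finset.range (r + s + 1),
          (∑ i ∈ Finset.range (u + 1), q ^ (2 * i * s) * f i lam * g (u - i) (lam - 2 * (i : ℝ)))
            * Z ^ u * X ^ (r + s - u))) Y
      = ∑ ℓ ∈ Finset.range (φ + 1),
          gaussQ q (φ : ℝ) ℓ * q ^ (2 * (ℓ : ℝ) * ((s : ℝ) - (φ : ℝ) + (ℓ : ℝ))) *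
            ∑ u ∈ Finset.range ((r + s - φ) + 1),
              (∑ i ∈ Finset.range (u + 1),
                  q ^ (2 * (i : ℝ) * ((s : ℝ) - ((φ : ℝ) - (ℓ : ℝ)))) *
                    invDerivFam q f ℓ i lam *
                    invDerivFam q g (φ - ℓ) (u - i) (lam - 2 * (ℓ : ℝ) - 2 * (i : ℝ)))
                * Y ^ u * X ^ ((r + s - φ) - u) := by
  simp only [mul_right_comm _ (_ ^ _) (X ^ _)]
  rw [qInvDeriv_iterate_sum hq _ _ _ _ hY]
  rcases le_or_gt φ (r + s) with h | h
  · obtain ⟨N, hN⟩ := Nat.exists_eq_add_of_le h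
    have hsub : r + s - φ = N := by omega
    rw [hsub, hN, add_assoc, Finset.sum_range_add, Finset.sum_eq_zero, zero_add]
    · simp_rw [Finset.mul_sum (Finset.range (N + 1))]
      rw [Finset.sum_comm]
      refine Finset.sum_congr rfl fun u _ => ?_
      have h₁ : φ + N - (φ + u) = N - u := by omega
      have h₂ : φ + u - φ = u := by omega
      have key := skewProduct_coeff_leibniz hq s f g φ u lam
      rw [h₁, h₂, add_comm φ u, mul_right_comm _ (X ^ _) (invDerivCoeff _ _ _), key,
        Finset.sum_mul, Finset.sum_mul]
      exact Finset.sum_congr rfl fun l _ => by ring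
    · intro u hu
      rw [invDerivCoeff_eq_zero hq (Finset.mem_range.1 hu)]
      simp
  · rw [Finset.sum_eq_zero, Finset.sum_eq_zero]
    · intro l hl
      have hz : invDerivFam q f l 0 lam * invDerivFam q g (φ - l) 0 (lam - 2 * (l : ℝ)) = 0 := by
        rcases lt_or_ge r l with hl' | hl'
        · simp [invDerivFam, hf l hl']
        · simp [invDerivFam, hg (φ - l) (by omega)]
      simp [Nat.sub_eq_zero_of_le h.le, hz]
    · intro u hu
      have := Finset.mem_range.1 hu
      rw [invDerivCoeff_eq_zero hq (show u < φ by omega)]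
      simp
end

section
/- Let 𝒞 ⊆ 𝒜 be a linear code with weight distribution (c_i), and let d be a natural number with 1 ≤ d ≤ n such that every nonzero A ∈ 𝒞 has rank(A) ≥ 2d and |𝒞| = q^{m(n−d+1)} (i.e. 𝒞 is a maximum skew rank distance (MSRD) code attaining the Singleton bound). Then c_0 = 1, c_i = 0 for 1 ≤ i ≤ d−1, and for every 0 ≤ r ≤ n−d, c_{d+r} = Σ_{i=0}^{r} (−1)^{r−i} q^{(r−i)(r−i−1)} [d+r; d+i] · [n; d+r] · (q^{m(i+1)} − 1). -/
/-- Gaussian binomial coefficients in base `b`, defined through the Pascal recurrence. -/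
def gaussNat (b : ℕ) : ℕ → ℕ → ℕ
  | _, 0 => 1
  | 0, _ + 1 => 0
  | x + 1, j + 1 => gaussNat b x j + b ^ (j + 1) * gaussNat b x (j + 1)

namespace gaussNat

variable (b : ℕ)

@[simp] lemma zero_right (x : ℕ) : gaussNat b x 0 = 1 := by cases x <;> rfl

@[simp] lemma zero_succ (j : ℕ) : gaussNat b 0 (j + 1) = 0 := rfl

lemma succ_succ (x j : ℕ) :
    gaussNat b (x + 1) (j + 1) = gaussNat b x j + b ^ (j + 1) * gaussNat b x (j + 1) := rfl

lemma eq_zero_of_lt {x j : ℕ} (h : x < j) : gaussNat b x j = 0 := by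
  induction x generalizing j with
  | zero => obtain ⟨j, rfl⟩ := Nat.exists_eq_succ_of_ne_zero h.ne'; rfl
  | succ x ih =>
    obtain ⟨j, rfl⟩ := Nat.exists_eq_succ_of_ne_zero (by omega : j ≠ 0)
    simp [succ_succ, ih (by omega : x < j), ih (by omega : x < j + 1)]

lemma pos_of_le {x j : ℕ} (h : j ≤ x) : 0 < gaussNat b x j := by
  induction x generalizing j with
  | zero => obtain rfl : j = 0 := by omega
            simp
  | succ x ih =>
    cases j with
    | zero => simp
    | succ j => have := ih (by omega : j ≤ x); rw [succ_succ]; omega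

@[simp] lemma self (x : ℕ) : gaussNat b x x = 1 := by
  induction x with
  | zero => rfl
  | succ x ih => simp [succ_succ, ih, eq_zero_of_lt b (Nat.lt_succ_self x)]

variable {R : Type*} [CommRing R]

/-- The ratio of horizontally neighbouring coefficients. -/
lemma succ_right (x j : ℕ) :
    ((b : R) ^ (j + 1) - 1) * (b : R) ^ j * gaussNat b x (j + 1)
      = ((b : R) ^ x - (b : R) ^ j) * gaussNat b x j := by
  induction x generalizing j with
  | zero => cases j <;> simp
  | succ x ih =>
    cases j with
    | zero =>
      have := ih 0
      simp only [succ_succ, zero_right] at *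
      push_cast at *
      linear_combination (b : R) * this
    | succ j =>
      have h1 := ih j
      have h2 := ih (j + 1)
      simp only [succ_succ]
      push_cast
      linear_combination (b : R) ^ (j + 2) * h2 + (b : R) * h1

/-- The absorption identity. -/
lemma absorption (x j : ℕ) :
    ((b : R) ^ (j + 1) - 1) * gaussNat b (x + 1) (j + 1)
      = ((b : R) ^ (x + 1) - 1) * gaussNat b x j := by
  have := succ_right (R := R) b x j
  rw [succ_succ]
  push_cast
  linear_combination (b : R) * this

/-- The second form of the Pascal recurrence. -/
lemma succ_succ' (hb : 0 < b) (x j : ℕ) (h : j ≤ x) :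
    gaussNat b (x + 1) (j + 1) = b ^ (x - j) * gaussNat b x j + gaussNat b x (j + 1) := by
  obtain ⟨k, rfl⟩ := Nat.exists_eq_add_of_le h
  have h1 := succ_right (R := ℤ) b (j + k) j
  rw [succ_succ, Nat.add_sub_cancel_left]
  have hb' : (b : ℤ) ^ j ≠ 0 := pow_ne_zero _ (by exact_mod_cast hb.ne')
  zify
  apply mul_left_cancel₀ hb'
  linear_combination h1

/-- The product formula. -/
lemma mul_prod (x j : ℕ) :
    (gaussNat b x j : R) * ∏ i ∈ Finset.range j, ((b : R) ^ j - (b : R) ^ i)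
      = ∏ i ∈ Finset.range j, ((b : R) ^ x - (b : R) ^ i) := by
  induction j generalizing x with
  | zero => simp
  | succ j ih =>
    cases x with
    | zero =>
      rw [Finset.prod_range_succ']
      simp [Finset.prod_range_succ']
    | succ x =>
      have key : ∀ y : ℕ, ∏ i ∈ Finset.range (j + 1), ((b : R) ^ (y + 1) - (b : R) ^ i)
          = (b : R) ^ j * ((b : R) ^ (y + 1) - 1)
            * ∏ i ∈ Finset.range j, ((b : R) ^ y - (b : R) ^ i) := by
        intro y
        rw [Finset.prod_range_succ']
        have : ∀ i ∈ Finset.range j, ((b : R) ^ (y + 1) - (b : R) ^ (i + 1))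
            = b * ((b : R) ^ y - (b : R) ^ i) := fun i _ => by ring
        rw [Finset.prod_congr rfl this, Finset.prod_mul_distrib]
        simp
        ring
      rw [key, key, ← ih x]
      linear_combination ((b : R) ^ j * ∏ i ∈ Finset.range j, ((b : R) ^ j - (b : R) ^ i))
        * absorption (R := R) b x j

/-- The `b`-factorial, up to a power of `b - 1`. -/
def fact (b x : ℕ) : ℝ := ∏ i ∈ Finset.range x, ((b : ℝ) ^ (i + 1) - 1)

variable {b}

lemma fact_ne_zero (hb : 1 < b) (x : ℕ) : fact b x ≠ 0 := by
  refine Finset.prod_ne_zero_iff.2 fun i _ => ?_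
  have : (1 : ℝ) < (b : ℝ) ^ (i + 1) := one_lt_pow₀ (by exact_mod_cast hb) (by omega)
  linarith

lemma fact_mul (a j : ℕ) : (gaussNat b (a + j) j : ℝ) * (fact b j * fact b a) = fact b (a + j) := by
  induction j with
  | zero => simp [fact]
  | succ j ih =>
    have h := absorption (R := ℝ) b (a + j) j
    rw [← add_assoc]
    unfold fact at *
    rw [Finset.prod_range_succ _ j, Finset.prod_range_succ _ (a + j), ← ih]
    linear_combination (∏ i ∈ Finset.range j, ((b : ℝ) ^ (i + 1) - 1))
      * (∏ i ∈ Finset.range a, ((b : ℝ) ^ (i + 1) - 1)) * h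

lemma eq_div (hb : 1 < b) (a j : ℕ) :
    (gaussNat b (a + j) j : ℝ) = fact b (a + j) / (fact b j * fact b a) := by
  rw [eq_div_iff (mul_ne_zero (fact_ne_zero hb _) (fact_ne_zero hb _)), fact_mul]

/-- The alternating sum of a row of Gaussian coefficients. -/
lemma alternating_sum (b N : ℕ) :
    ∑ l ∈ Finset.range (N + 1), (-1 : ℝ) ^ l * (b : ℝ) ^ (l.choose 2) * gaussNat b N l
      = if N = 0 then 1 else 0 := by
  cases N with
  | zero => simp
  | succ N =>
    have h : ∀ l ∈ Finset.range (N + 1),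
        (-1 : ℝ) ^ (l + 1) * (b : ℝ) ^ ((l + 1).choose 2) * gaussNat b (N + 1) (l + 1)
          = (-1 : ℝ) ^ (l + 1) * (b : ℝ) ^ ((l + 1 + 1).choose 2) * gaussNat b N (l + 1)
            - (-1 : ℝ) ^ l * (b : ℝ) ^ ((l + 1).choose 2) * gaussNat b N l := by
      intro l _
      have e : (l + 1 + 1).choose 2 = (l + 1) + (l + 1).choose 2 := by
        rw [Nat.choose_succ_succ' (l + 1) 1]; simp
      rw [e, succ_succ, pow_add]
      push_cast
      ring
    rw [Finset.sum_range_succ', Finset.sum_congr rfl h,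
      Finset.sum_range_sub (fun l => (-1 : ℝ) ^ l * (b : ℝ) ^ ((l + 1).choose 2) * gaussNat b N l)]
    simp [eq_zero_of_lt b (Nat.lt_succ_self N)]

end gaussNat

namespace AltMatrix

open Matrix

section Alternating

variable {F : Type*} [Field F] {ι κ : Type*}

/-- The space of alternating matrices. -/
def alt (F : Type*) [Field F] (ι : Type*) : Submodule F (Matrix ι ι F) where
  carrier := {A | Aᵀ = -A ∧ ∀ i, A i i = 0}
  zero_mem' := by simp
  add_mem' := by
    rintro A B ⟨hA, hA'⟩ ⟨hB, hB'⟩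
    exact ⟨by rw [transpose_add, hA, hB, neg_add], fun i => by simp [hA', hB']⟩
  smul_mem' := by
    rintro c A ⟨hA, hA'⟩
    exact ⟨by rw [transpose_smul, hA, smul_neg], fun i => by simp [hA']⟩

lemma apply_swap {A : Matrix ι ι F} (hA : A ∈ alt F ι) (i j : ι) : A i j = -A j i := by
  have := congrFun (congrFun hA.1 j) i
  simpa using this

lemma sub_transpose_mem (M : Matrix ι ι F) : M - Mᵀ ∈ alt F ι :=
  ⟨by simp, by simp⟩

/-- A matrix with a border: first row `-a`, first column `a`, and zero corner. -/
def border (a : κ → F) (A : Matrix κ κ F) : Matrix (Unit ⊕ κ) (Unit ⊕ κ) F :=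
  fromBlocks 0 (-replicateRow Unit a) (replicateCol Unit a) A

lemma border_mem {A : Matrix κ κ F} (hA : A ∈ alt F κ) (a : κ → F) :
    border a A ∈ alt F (Unit ⊕ κ) := by
  refine ⟨?_, ?_⟩
  · rw [border, fromBlocks_transpose, fromBlocks_neg, hA.1]
    simp
  · rintro (_ | i)
    · simp [border]
    · simp [border, hA.2]

/-- Alternating matrices with one more index are borderings. -/
def borderEquiv (F : Type*) [Field F] (κ : Type*) :
    alt F κ × (κ → F) ≃ alt F (Unit ⊕ κ) where
  toFun p := ⟨border p.2 p.1.1, border_mem p.1.2 p.2⟩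
  invFun B := (⟨B.1.toBlocks₂₂, by
      refine ⟨?_, fun i => B.2.2 _⟩
      ext i j
      exact apply_swap B.2 _ _⟩, fun i => B.1 (Sum.inr i) (Sum.inl ()))
  left_inv p := by
    ext <;> simp [border]
  right_inv B := by
    ext (_ | i) (_ | j)
    · simp [border, B.2.2]
    · simp [border, apply_swap B.2 (Sum.inl ())]
    · simp [border]
    · simp [border, toBlocks₂₂]

/-- The first column of `M - Mᵀ` below the corner. -/
def borderVec (M : Matrix (Unit ⊕ κ) (Unit ⊕ κ) F) : κ → F :=
  fun i => M (Sum.inr i) (Sum.inl ()) - M (Sum.inl ()) (Sum.inr i)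

lemma sub_transpose_eq_border (M : Matrix (Unit ⊕ κ) (Unit ⊕ κ) F) :
    M - Mᵀ = border (borderVec M) (M.toBlocks₂₂ - M.toBlocks₂₂ᵀ) := by
  ext (_ | i) (_ | j) <;> simp [border, borderVec, toBlocks₂₂]

/-- The trace form on square matrices. -/
def pairing (F : Type*) [Field F] (ι : Type*) [Fintype ι] :
    LinearMap.BilinForm F (Matrix ι ι F) :=
  LinearMap.mk₂ F (fun A M => (Aᵀ * M).trace)
    (fun A B M => by simp [Matrix.add_mul]) (fun c A M => by simp)
    (fun A M N => by simp [Matrix.mul_add]) (fun c A M => by simp)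

variable [Fintype κ]

lemma dotProduct_mulVec_self {A : Matrix κ κ F} (hA : A ∈ alt F κ) (x : κ → F) :
    x ⬝ᵥ (A *ᵥ x) = 0 := by
  classical
  simp only [dotProduct, mulVec, Finset.mul_sum]
  rw [← Finset.sum_product']
  refine Finset.sum_involution (fun p _ => (p.2, p.1)) ?_ ?_ ?_ ?_
  · intro p _
    simp only
    rw [apply_swap hA p.2 p.1]
    ring
  · rintro ⟨i, j⟩ _ h heq
    obtain rfl : j = i := congrArg Prod.fst heq
    simp [hA.2] at h
  · simp
  · simp

lemma congr_mem {A : Matrix κ κ F} (hA : A ∈ alt F κ) (G : Matrix ι κ F) :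
    G * A * Gᵀ ∈ alt F ι := by
  refine ⟨?_, fun i => ?_⟩
  · simp [transpose_mul, hA.1, Matrix.mul_assoc]
  · rw [Matrix.mul_assoc]
    have := dotProduct_mulVec_self hA (G i)
    rw [← this]
    rfl

variable [Fintype ι]

lemma pairing_apply (A M : Matrix ι ι F) : pairing F ι A M = (Aᵀ * M).trace := rfl

lemma pairing_isSymm : (pairing F ι).IsSymm :=
  ⟨fun A M => by
    simp only [pairing_apply]
    rw [← trace_transpose (Aᵀ * M), transpose_mul, transpose_transpose]⟩

lemma pairing_single [DecidableEq ι] (M : Matrix ι ι F) (i j : ι) :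
    pairing F ι (Matrix.single i j 1) M = M i j := by
  rw [pairing_apply, transpose_single, trace_single_mul]
  simp

lemma pairing_nondegenerate : (pairing F ι).Nondegenerate := by
  classical
  have key : (pairing F ι).SeparatingRight := fun M hM => by
    ext i j
    rw [← pairing_single M i j, hM]
    rfl
  refine ⟨fun M hM => key M fun A => ?_, key⟩
  rw [pairing_isSymm.eq]
  exact hM A

lemma range_mulVecLin_fromCols {m : Type*} (A : Matrix m κ F) (a : m → F) :
    LinearMap.range (fromCols (replicateCol Unit a) A).mulVecLin
      = LinearMap.range A.mulVecLin ⊔ Submodule.span F {a} := by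
  rw [range_mulVecLin, range_mulVecLin, ← Submodule.span_union]
  congr 1
  ext v
  simp only [Set.mem_range, Sum.exists, Set.mem_union, Set.mem_singleton_iff]
  constructor
  · rintro (⟨u, rfl⟩ | ⟨k, rfl⟩)
    · exact Or.inr rfl
    · exact Or.inl ⟨k, rfl⟩
  · rintro (⟨k, rfl⟩ | rfl)
    · exact Or.inr ⟨k, rfl⟩
    · exact Or.inl ⟨(), rfl⟩

open Classical in
/-- The effect of adding a column on the rank. -/
lemma rank_fromCols {m : Type*} [Fintype m] (A : Matrix m κ F) (a : m → F) :
    (fromCols (replicateCol Unit a) A).rank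
      = if a ∈ LinearMap.range A.mulVecLin then A.rank else A.rank + 1 := by
  rw [Matrix.rank, Matrix.rank, range_mulVecLin_fromCols]
  split_ifs with h
  · rw [sup_eq_left.2 ((Submodule.span_singleton_le_iff_mem _ _).2 h)]
  · exact Submodule.finrank_sup_span_singleton h

open Classical in
/-- The rank of a bordered alternating matrix. -/
lemma rank_border {A : Matrix κ κ F} (hA : A ∈ alt F κ) (a : κ → F) :
    (border a A).rank
      = if a ∈ LinearMap.range A.mulVecLin then A.rank else A.rank + 2 := by
  have e : (border a A)ᵀ = fromCols (replicateCol Unit (Sum.elim (fun _ : Unit => (0 : F)) (-a)))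
      (fromCols (replicateCol Unit a) A)ᵀ := by
    ext (_ | i) (_ | j) <;> simp [border]
  have hmem : (Sum.elim (fun _ : Unit => (0 : F)) (-a)) ∈
      LinearMap.range ((fromCols (replicateCol Unit a) A)ᵀ).mulVecLin
      ↔ a ∈ LinearMap.range A.mulVecLin := by
    simp only [LinearMap.mem_range, mulVecLin_apply]
    refine exists_congr fun y => ?_
    rw [transpose_fromCols, hA.1, fromRows_mulVec]
    constructor
    · intro h
      ext i
      have := congrFun h (Sum.inr i)
      simpa [neg_mulVec] using this
    · intro h
      ext (_ | i)
      · have := dotProduct_mulVec_self hA y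
        rw [h] at this
        simpa [mulVec, dotProduct_comm] using this
      · simp [neg_mulVec, h]
  rw [← rank_transpose, e, rank_fromCols, rank_transpose, rank_fromCols]
  simp only [hmem]
  split_ifs <;> rfl

lemma even_rank (t : ℕ) {A : Matrix (Fin t) (Fin t) F} (hA : A ∈ alt F (Fin t)) :
    Even A.rank := by
  classical
  induction t with
  | zero =>
    have := A.rank_le_card_width
    simp at this
    simp [this]
  | succ t ih =>
    let e : Fin (t + 1) ≃ Unit ⊕ Fin t := Fintype.equivOfCardEq (by simp [add_comm])
    have h : reindex e e A ∈ alt F (Unit ⊕ Fin t) := by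
      refine ⟨?_, fun i => hA.2 _⟩
      ext i j
      exact apply_swap hA _ _
    obtain ⟨⟨B, a⟩, hB⟩ := (borderEquiv F (Fin t)).surjective ⟨_, h⟩
    have hB' : border a B.1 = reindex e e A := congrArg Subtype.val hB
    rw [← rank_reindex e e, ← hB', rank_border B.2]
    have := ih B.2
    split_ifs
    · exact this
    · exact this.add even_two

lemma rank_congr {A : Matrix κ κ F} {G : Matrix ι κ F} {H : Matrix κ ι F} [DecidableEq κ]
    (h : H * G = 1) : (G * A * Gᵀ).rank = A.rank := by
  apply le_antisymm
  · exact (rank_mul_le_left _ _).trans (rank_mul_le_right _ _)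
  · have : A = H * (G * A * Gᵀ) * Hᵀ := by
      have h' : Gᵀ * Hᵀ = 1 := by rw [← transpose_mul, h, transpose_one]
      calc A = (H * G) * A * (Gᵀ * Hᵀ) := by rw [h, h', Matrix.one_mul, Matrix.mul_one]
        _ = _ := by simp only [Matrix.mul_assoc]
    conv_lhs => rw [this]
    exact (rank_mul_le_left _ _).trans (rank_mul_le_right _ _)

/-- Congruence by an invertible matrix as a bijection between alternating matrices. -/
def congrEquiv [DecidableEq ι] [DecidableEq κ] (G : Matrix ι κ F) (H : Matrix κ ι F)
    (hGH : G * H = 1) (hHG : H * G = 1) : alt F κ ≃ alt F ι where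
  toFun A := ⟨G * A.1 * Gᵀ, congr_mem A.2 G⟩
  invFun A := ⟨H * A.1 * Hᵀ, congr_mem A.2 H⟩
  left_inv A := by
    ext1
    have h' : Gᵀ * Hᵀ = 1 := by rw [← transpose_mul, hHG, transpose_one]
    calc H * (G * A.1 * Gᵀ) * Hᵀ = (H * G) * A.1 * (Gᵀ * Hᵀ) := by simp only [Matrix.mul_assoc]
      _ = A.1 := by rw [hHG, h', Matrix.one_mul, Matrix.mul_one]
  right_inv A := by
    ext1
    have h' : Hᵀ * Gᵀ = 1 := by rw [← transpose_mul, hGH, transpose_one]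
    calc G * (H * A.1 * Hᵀ) * Gᵀ = (G * H) * A.1 * (Hᵀ * Gᵀ) := by simp only [Matrix.mul_assoc]
      _ = A.1 := by rw [hGH, h', Matrix.one_mul, Matrix.mul_one]

lemma pairing_congr (A : Matrix κ κ F) (G : Matrix ι κ F) (M : Matrix ι ι F) :
    pairing F ι (G * A * Gᵀ) M = pairing F κ A (Gᵀ * M * G) := by
  simp only [pairing_apply, transpose_mul, transpose_transpose]
  rw [Matrix.mul_assoc, trace_mul_comm]
  simp only [Matrix.mul_assoc]

lemma pairing_border (A : Matrix κ κ F) (a : κ → F) (M : Matrix (Unit ⊕ κ) (Unit ⊕ κ) F) :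
    pairing F (Unit ⊕ κ) (border a A) M
      = pairing F κ A M.toBlocks₂₂ + a ⬝ᵥ borderVec M := by
  simp [pairing_apply, border, trace, Matrix.mul_apply, dotProduct, borderVec, toBlocks₂₂,
    mul_sub, Finset.sum_add_distrib]
  ring

lemma exists_equiv_apply_eq {α β : Type*} (e : α ≃ β) {a a' : α} (ha : a ≠ a')
    {b b' : β} (hb : b ≠ b') : ∃ e : α ≃ β, e a = b ∧ e a' = b' := by
  classical
  let e₁ := e.trans (Equiv.swap (e a) b)
  have h₁ : e₁ a = b := by simp [e₁]
  refine ⟨e₁.trans (Equiv.swap (e₁ a') b'), ?_, by simp⟩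
  rw [Equiv.trans_apply, h₁, Equiv.swap_apply_of_ne_of_ne _ hb]
  rw [← h₁]
  exact fun h => ha (e₁.injective h)

lemma exists_hyperbolic_of_ne_zero [DecidableEq κ]
    {X : Matrix (Unit ⊕ (Unit ⊕ κ)) (Unit ⊕ (Unit ⊕ κ)) F}
    (hX : X ∈ alt F _) (h0 : X (Sum.inr (Sum.inl ())) (Sum.inl ()) ≠ 0) :
    ∃ (G H : Matrix (Unit ⊕ (Unit ⊕ κ)) (Unit ⊕ (Unit ⊕ κ)) F) (h : F) (D : Matrix κ κ F),
      G * H = 1 ∧ H * G = 1 ∧ h ≠ 0 ∧ D ∈ alt F κ ∧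
      Gᵀ * X * G = border (Sum.elim (fun _ => h) 0) (border 0 D) := by
  set h := X (Sum.inr (Sum.inl ())) (Sum.inl ()) with hh
  let x : κ → F := fun k => X (Sum.inr (Sum.inr k)) (Sum.inr (Sum.inl ())) / h
  let y : κ → F := fun k => -X (Sum.inr (Sum.inr k)) (Sum.inl ()) / h
  let P : (κ → F) → (κ → F) → Matrix (Unit ⊕ (Unit ⊕ κ)) (Unit ⊕ (Unit ⊕ κ)) F := fun x y =>
    fromBlocks 1 (replicateRow Unit (Sum.elim 0 x)) 0 (fromBlocks 1 (replicateRow Unit y) 0 1)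
  have hP : ∀ x y, P x y * P (-x) (-y) = 1 := by
    intro x y
    ext (_ | _ | i) (_ | _ | j) <;>
      simp [P, Matrix.mul_apply, Matrix.one_apply]
  obtain ⟨⟨A, a⟩, hA⟩ := (borderEquiv F (Unit ⊕ κ)).surjective
    ⟨_, congr_mem hX (P x y)ᵀ⟩
  obtain ⟨⟨D, c⟩, hD⟩ := (borderEquiv F κ).surjective A
  have hA' : border a A.1 = (P x y)ᵀ * X * P x y := by
    exact (congrArg Subtype.val hA).trans (by simp)
  have hD' : border c D.1 = A.1 := congrArg Subtype.val hD
  have ha : a = Sum.elim (fun _ => h) 0 := by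
    ext i
    have e : a i = ((P x y)ᵀ * X * P x y) (Sum.inr i) (Sum.inl ()) := by
      rw [← hA']; rfl
    rw [e]
    rcases i with _ | k
    · simp [P, Matrix.mul_apply, hh]
    · simp [P, Matrix.mul_apply, Matrix.one_apply, hX.2, y, ← hh]
      field_simp
      ring
  have hc : c = 0 := by
    ext k
    have e : c k = ((P x y)ᵀ * X * P x y) (Sum.inr (Sum.inr k)) (Sum.inr (Sum.inl ())) := by
      rw [← hA', ← hD']; rfl
    rw [e]
    simp [P, Matrix.mul_apply, Matrix.one_apply, hX.2, x,
      apply_swap hX (Sum.inl ()) (Sum.inr (Sum.inl ())), ← hh]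
    field_simp
    ring
  refine ⟨P x y, P (-x) (-y), h, D.1, hP x y, ?_, h0, D.2, ?_⟩
  · simpa using hP (-x) (-y)
  · rw [← hA', ← hD', ha, hc]

/-- A nonzero alternating matrix splits off a hyperbolic plane. -/
lemma exists_hyperbolic {t : ℕ} {B : Matrix (Fin t) (Fin t) F} (hB : B ∈ alt F (Fin t))
    (h0 : B ≠ 0) :
    ∃ s, t = s + 2 ∧ ∃ (G : Matrix (Fin t) (Unit ⊕ (Unit ⊕ Fin s)) F)
      (H : Matrix (Unit ⊕ (Unit ⊕ Fin s)) (Fin t) F) (h : F) (D : Matrix (Fin s) (Fin s) F),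
      G * H = 1 ∧ H * G = 1 ∧ h ≠ 0 ∧ D ∈ alt F (Fin s) ∧
      Gᵀ * B * G = border (Sum.elim (fun _ => h) 0) (border 0 D) := by
  obtain ⟨i, j, hij⟩ : ∃ i j, B i j ≠ 0 := by
    by_contra! h
    exact h0 (Matrix.ext h)
  have hne : i ≠ j := by
    rintro rfl
    exact hij (hB.2 i)
  have hcard := Fintype.card_le_of_injective _ (Function.Embedding.injective ⟨![i, j], by
    intro a b
    fin_cases a <;> fin_cases b <;> simp [hne, hne.symm]⟩)
  simp only [Fintype.card_fin] at hcard
  obtain ⟨s, rfl⟩ := Nat.exists_eq_add_of_le' hcard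
  refine ⟨s, rfl, ?_⟩
  obtain ⟨e, he, he'⟩ := exists_equiv_apply_eq
    (α := Unit ⊕ (Unit ⊕ Fin s)) (β := Fin (s + 2))
    (Fintype.equivOfCardEq (by simp; omega))
    (a := Sum.inr (Sum.inl ())) (a' := Sum.inl ()) (by simp) hne
  have hX : B.submatrix e e ∈ alt F (Unit ⊕ (Unit ⊕ Fin s)) := by
    refine ⟨?_, fun i => hB.2 _⟩
    ext i j
    exact apply_swap hB _ _
  obtain ⟨G, H, h, D, h1, h2, h3, h4, h5⟩ := exists_hyperbolic_of_ne_zero hX (by simpa [he, he'])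
  refine ⟨G.submatrix e.symm id, H.submatrix id e.symm, h, D, ?_, ?_, h3, h4, ?_⟩
  · rw [← submatrix_mul _ _ _ _ _ Function.bijective_id, h1, submatrix_one_equiv]
  · rw [submatrix_mul_equiv, h2, submatrix_id_id]
  · rw [← h5]
    have : B = (B.submatrix e e).submatrix e.symm e.symm := by simp
    conv_lhs => rw [this, transpose_submatrix, submatrix_mul_equiv, submatrix_mul_equiv,
      submatrix_id_id]

end Alternating
end AltMatrix

namespace AltMatrix

open Matrix

section CharacterSums

variable {F : Type*} [Field F] {χ : AddChar F ℂ}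

open Classical in
/-- Orthogonality of characters on a subspace. -/
lemma sum_char_submodule (hχ : χ ≠ 1) {V : Type*} [AddCommGroup V] [Module F V]
    (W : Submodule F V) [Fintype W] (l : V →ₗ[F] F) :
    ∑ w : W, χ (l w) = if ∀ w ∈ W, l w = 0 then (Nat.card W : ℂ) else 0 := by
  split_ifs with h
  · rw [Finset.sum_congr rfl (g := fun _ => (1 : ℂ))
      (fun w _ => by rw [h w w.2, AddChar.map_zero_eq_one])]
    simp
  · push Not at h
    obtain ⟨w, hw, hlw⟩ := h
    obtain ⟨x, hx⟩ := AddChar.ne_one_iff.1 hχ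
    refine AddChar.sum_eq_zero_of_ne_one
      (ψ := χ.compAddMonoidHom (l.comp W.subtype).toAddMonoidHom) (AddChar.ne_one_iff.2
        ⟨⟨(x / l w) • w, W.smul_mem _ hw⟩, ?_⟩)
    simpa [hlw] using hx

variable {ι κ : Type*} [Fintype ι] [Fintype κ]

lemma card_range_mulVecLin (A : Matrix κ κ F) :
    Nat.card (LinearMap.range A.mulVecLin) = Nat.card F ^ A.rank :=
  Module.natCard_eq_pow_finrank

variable [Fintype F]

noncomputable instance (W : Submodule F (Matrix ι ι F)) : Fintype W := Fintype.ofFinite _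

/-- The Fourier transform on alternating matrices of a function of the rank. -/
noncomputable def altSum (χ : AddChar F ℂ) (φ : ℕ → ℂ) (M : Matrix ι ι F) : ℂ :=
  ∑ A : alt F ι, χ (pairing F ι A M) * φ A.1.rank

lemma altSum_congr [DecidableEq ι] [DecidableEq κ] (φ : ℕ → ℂ) (M : Matrix ι ι F)
    {G : Matrix ι κ F} {H : Matrix κ ι F} (hGH : G * H = 1) (hHG : H * G = 1) :
    altSum χ φ M = altSum χ φ (Gᵀ * M * G) := by
  refine (Fintype.sum_equiv (congrEquiv G H hGH hHG) _ _ fun A => ?_).symm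
  simp only [congrEquiv, Equiv.coe_fn_mk]
  rw [pairing_congr, rank_congr hHG]

lemma altSum_border [DecidableEq κ] (φ : ℕ → ℂ) (M : Matrix (Unit ⊕ κ) (Unit ⊕ κ) F) :
    altSum χ φ M = ∑ A : alt F κ, χ (pairing F κ A M.toBlocks₂₂) *
      ∑ a : κ → F, χ (a ⬝ᵥ borderVec M) * φ (border a A.1).rank := by
  rw [altSum, ← (borderEquiv F κ).sum_comp, Fintype.sum_prod_type]
  refine Finset.sum_congr rfl fun A _ => ?_
  rw [Finset.mul_sum]
  refine Finset.sum_congr rfl fun a _ => ?_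
  simp only [borderEquiv, Equiv.coe_fn_mk]
  rw [pairing_border, AddChar.map_add_eq_mul, mul_assoc]

open Classical in
lemma sum_border [DecidableEq κ] (hχ : χ ≠ 1) (φ : ℕ → ℂ) {A : Matrix κ κ F} (hA : A ∈ alt F κ)
    (β : κ → F) :
    ∑ a : κ → F, χ (a ⬝ᵥ β) * φ (border a A).rank
      = φ (A.rank + 2) * (if β = 0 then (Nat.card F : ℂ) ^ Fintype.card κ else 0)
        + (φ A.rank - φ (A.rank + 2)) * (if A *ᵥ β = 0 then (Nat.card F : ℂ) ^ A.rank else 0) := by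
  let l : (κ → F) →ₗ[F] F := (dotProductBilin F F).flip β
  have hl : ∀ a, l a = a ⬝ᵥ β := fun a => rfl
  have htop : ∑ a : κ → F, χ (a ⬝ᵥ β) = if β = 0 then (Nat.card F : ℂ) ^ Fintype.card κ else 0 := by
    have h := sum_char_submodule hχ (⊤ : Submodule F (κ → F)) l
    have h2 : ∑ w : (⊤ : Submodule F (κ → F)), χ (l w) = ∑ a : κ → F, χ (l a) :=
      Fintype.sum_equiv Submodule.topEquiv.toEquiv _ _ fun _ => rfl
    rw [h2] at h
    simp only [hl] at h
    rw [h]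
    have h3 : (∀ w ∈ (⊤ : Submodule F (κ → F)), w ⬝ᵥ β = 0) ↔ β = 0 := by
      refine ⟨fun h => dotProduct_eq_zero β fun w => ?_, fun h w _ => by simp [h]⟩
      rw [dotProduct_comm]; exact h w trivial
    simp only [h3]
    congr 1
    simp
  have hran : ∑ a : κ → F, (if a ∈ LinearMap.range A.mulVecLin then χ (a ⬝ᵥ β) else 0)
      = if A *ᵥ β = 0 then (Nat.card F : ℂ) ^ A.rank else 0 := by
    have h := sum_char_submodule hχ (LinearMap.range A.mulVecLin) l
    have hiff : (∀ w ∈ LinearMap.range A.mulVecLin, l w = 0) ↔ A *ᵥ β = 0 := by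
      have hx : ∀ x, A *ᵥ x ⬝ᵥ β = -(A *ᵥ β ⬝ᵥ x) := fun x => by
        rw [dotProduct_comm, dotProduct_mulVec, ← mulVec_transpose, hA.1, neg_mulVec,
          neg_dotProduct]
      constructor
      · intro h
        refine dotProduct_eq_zero _ fun x => ?_
        have := h (A *ᵥ x) ⟨x, rfl⟩
        rwa [hl, hx, neg_eq_zero] at this
      · rintro h _ ⟨x, rfl⟩
        rw [hl, mulVecLin_apply, hx, h, zero_dotProduct, neg_zero]
    rw [← Finset.sum_filter, Finset.sum_subtype (p := (· ∈ LinearMap.range A.mulVecLin)) _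
      (by simp)]
    refine h.trans ?_
    simp only [hiff, card_range_mulVecLin, Nat.cast_pow]
  rw [← htop, ← hran, Finset.mul_sum, Finset.mul_sum, ← Finset.sum_add_distrib]
  refine Finset.sum_congr rfl fun a _ => ?_
  rw [rank_border hA]
  split_ifs <;> ring

/-- Reduction of the transform at a matrix whose alternating part splits off a hyperbolic plane. -/
lemma altSum_hyperbolic [DecidableEq κ] (hχ : χ ≠ 1) (φ : ℕ → ℂ)
    (M : Matrix (Unit ⊕ (Unit ⊕ κ)) (Unit ⊕ (Unit ⊕ κ)) F) {h : F} (h0 : h ≠ 0)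
    (hM : borderVec M = Sum.elim (fun _ => h) 0) :
    altSum χ φ M = altSum χ (fun r => (φ r - φ (r + 2)) * (Nat.card F : ℂ) ^ r)
      M.toBlocks₂₂.toBlocks₂₂ := by
  classical
  have hne : (Sum.elim (fun _ => h) 0 : Unit ⊕ κ → F) ≠ 0 := fun h' =>
    h0 (congrFun h' (Sum.inl ()))
  rw [altSum_border]
  simp only [hM]
  rw [← (borderEquiv F κ).sum_comp, Fintype.sum_prod_type, altSum]
  refine Finset.sum_congr rfl fun A _ => ?_
  have key : ∀ a : κ → F, border a A.1 *ᵥ (Sum.elim (fun _ => h) 0) = 0 ↔ a = 0 := by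
    intro a
    constructor
    · intro h'
      ext k
      have := congrFun h' (Sum.inr k)
      simpa [border, fromBlocks_mulVec, mulVec, dotProduct, h0] using this
    · rintro rfl
      ext (_ | k) <;> simp [border, mulVec, dotProduct]
  have hr : (border (0 : κ → F) A.1).rank = A.1.rank := by
    rw [rank_border A.2, if_pos (Submodule.zero_mem _)]
  rw [Finset.sum_eq_single (0 : κ → F)]
  · rw [sum_border hχ φ ((borderEquiv F κ) (A, 0)).2]
    simp only [borderEquiv, Equiv.coe_fn_mk, pairing_border, key, hne, hr, if_true, if_false]
    simp
  · intro a _ ha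
    rw [sum_border hχ φ ((borderEquiv F κ) (A, a)).2]
    simp [borderEquiv, key, hne, ha]
  · simp

/-- Reduction of the transform at a symmetric matrix. -/
lemma altSum_border_symm [DecidableEq κ] (hχ : χ ≠ 1) (φ : ℕ → ℂ)
    (M : Matrix (Unit ⊕ κ) (Unit ⊕ κ) F) (hM : borderVec M = 0) :
    altSum χ φ M = altSum χ (fun r => φ (r + 2) * ((Nat.card F : ℂ) ^ Fintype.card κ
      - (Nat.card F : ℂ) ^ r) + φ r * (Nat.card F : ℂ) ^ r) M.toBlocks₂₂ := by
  rw [altSum_border, altSum]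
  refine Finset.sum_congr rfl fun A _ => ?_
  rw [hM, sum_border hχ φ A.2]
  simp
  ring_nf
  simp

end CharacterSums
end AltMatrix

namespace AltMatrix

open Matrix

section Transform

variable {F : Type*} [Field F]

lemma exists_rank_eq {t : ℕ} {A : Matrix (Fin t) (Fin t) F} (hA : A ∈ alt F (Fin t)) :
    ∃ i ≤ t / 2, A.rank = 2 * i := by
  obtain ⟨i, hi⟩ := even_rank t hA
  have := A.rank_le_width
  exact ⟨i, by omega, by omega⟩

lemma border_injective {κ : Type*} {a a' : κ → F} {A A' : Matrix κ κ F}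
    (h : border a A = border a' A') : a = a' ∧ A = A' := by
  obtain ⟨-, -, h1, h2⟩ := fromBlocks_inj.1 h
  exact ⟨funext fun i => congrFun (congrFun h1 i) (), h2⟩

lemma rank_hyperbolic {κ : Type*} [Fintype κ] {D : Matrix κ κ F} (hD : D ∈ alt F κ) {h : F}
    (h0 : h ≠ 0) :
    (border (Sum.elim (fun _ => h) 0) (border 0 D)).rank = D.rank + 2 := by
  classical
  rw [rank_border (border_mem hD 0), if_neg, rank_border hD, if_pos (Submodule.zero_mem _)]
  rintro ⟨x, hx⟩
  have := congrFun hx (Sum.inl ())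
  simp [border, mulVec, dotProduct] at this
  exact h0 this.symm

variable [Fintype F] {χ : AddChar F ℂ}

lemma altSum_linear {ι : Type*} [Fintype ι] (φ ψ : ℕ → ℂ) (a b : ℂ) (M : Matrix ι ι F) :
    altSum χ (fun r => a * φ r + b * ψ r) M = a * altSum χ φ M + b * altSum χ ψ M := by
  simp only [altSum, Finset.mul_sum]
  rw [← Finset.sum_add_distrib]
  exact Finset.sum_congr rfl fun A _ => by ring

lemma altSum_smul {ι : Type*} [Fintype ι] (φ : ℕ → ℂ) (a : ℂ) (M : Matrix ι ι F) :
    altSum χ (fun r => a * φ r) M = a * altSum χ φ M := by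
  simpa using altSum_linear (χ := χ) φ φ a 0 M

lemma altSum_ext {t : ℕ} {φ ψ : ℕ → ℂ} (M : Matrix (Fin t) (Fin t) F)
    (h : ∀ i ≤ t / 2, φ (2 * i) = ψ (2 * i)) : altSum χ φ M = altSum χ ψ M := by
  refine Finset.sum_congr rfl fun A _ => ?_
  obtain ⟨i, hi, hr⟩ := exists_rank_eq A.2
  rw [hr, h i hi]

/-- Pointwise reduction used at nonsymmetric arguments. -/
lemma gauss_sub_mul {b : ℕ} (hb : 0 < b) {n i j : ℕ} (hi : i ≤ n) (hj : j ≤ n) :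
    ((gaussNat b (n + 1 - i) (j + 1) : ℂ) - gaussNat b (n - i) (j + 1)) * (b : ℂ) ^ i
      = (b : ℂ) ^ (n - j) * gaussNat b (n - i) j := by
  obtain ⟨x, rfl⟩ := Nat.exists_eq_add_of_le hi
  have e1 : i + x + 1 - i = x + 1 := by omega
  have e2 : i + x - i = x := by omega
  rw [e1, e2]
  rcases le_or_gt j x with h | h
  · rw [gaussNat.succ_succ' b hb x j h]
    have e3 : i + x - j = (x - j) + i := by omega
    rw [e3, pow_add]
    push_cast
    ring
  · simp [gaussNat.eq_zero_of_lt b h, gaussNat.eq_zero_of_lt b (by omega : x + 1 < j + 1),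
      gaussNat.eq_zero_of_lt b (by omega : x < j + 1)]

/-- Pointwise reduction used at symmetric arguments of odd size. -/
lemma gauss_odd_reduction {b : ℕ} (hb : 0 < b) {n i j : ℕ} (hi : i ≤ n) (hj : j ≤ n) :
    (gaussNat b (n - (i + 1)) j : ℂ) * ((b : ℂ) ^ n - (b : ℂ) ^ i)
      + gaussNat b (n - i) j * (b : ℂ) ^ i = (b : ℂ) ^ (n - j) * gaussNat b (n - i) j := by
  have hb' : (b : ℂ) ^ j ≠ 0 := pow_ne_zero _ (by exact_mod_cast hb.ne')
  obtain ⟨x, rfl⟩ := Nat.exists_eq_add_of_le hi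
  obtain ⟨y, hy⟩ := Nat.exists_eq_add_of_le hj
  rw [Nat.add_sub_cancel_left, show i + x - j = y by omega]
  apply mul_left_cancel₀ hb'
  have hp : (b : ℂ) ^ j * (b : ℂ) ^ y = (b : ℂ) ^ i * (b : ℂ) ^ x := by
    rw [← pow_add, ← pow_add, ← hy]
  cases x with
  | zero =>
    cases j with
    | zero => simp at *; rw [hp]
    | succ j => simp
  | succ x =>
    rw [show i + (x + 1) - (i + 1) = x by omega]
    have h1 := gaussNat.absorption (R := ℂ) b x j
    have h2 := gaussNat.succ_right (R := ℂ) b (x + 1) j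
    rw [pow_add]
    linear_combination (-(b : ℂ) ^ j * (b : ℂ) ^ i) * h1 + (b : ℂ) ^ i * h2
      - (gaussNat b (x + 1) j : ℂ) * hp

/-- The transform of a Gaussian coefficient in the rank. -/
theorem altSum_gauss (hχ : χ ≠ 1) (t : ℕ) (M : Matrix (Fin t) (Fin t) F) (j : ℕ) (hj : j ≤ t / 2) :
    altSum χ (fun r => (gaussNat (Fintype.card F ^ 2) (t / 2 - r / 2) j : ℂ)) M
      = (((Fintype.card F ^ (2 * ((t + 1) / 2) - 1)) ^ (t / 2 - j)
        * gaussNat (Fintype.card F ^ 2) (t / 2 - (M - Mᵀ).rank / 2) (t / 2 - j) : ℕ) : ℂ) := by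
  classical
  induction t using Nat.strong_induction_on generalizing j with
  | _ t ih =>
  have hq : 0 < Fintype.card F := Fintype.card_pos
  have hb : 0 < Fintype.card F ^ 2 := pow_pos hq 2
  have hpow : ∀ i, (Fintype.card F : ℂ) ^ (2 * i) = ((Fintype.card F ^ 2 : ℕ) : ℂ) ^ i := fun i => by
    rw [pow_mul]; push_cast; rfl
  by_cases h0 : M - Mᵀ = 0
  · rw [h0]
    cases t with
    | zero =>
      obtain rfl : j = 0 := by omega
      have : Subsingleton (alt F (Fin 0)) := ⟨fun A B => Subtype.ext (Subsingleton.elim _ _)⟩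
      rw [altSum, Fintype.sum_subsingleton _ (0 : alt F (Fin 0))]
      simp
    | succ s =>
      let e : Unit ⊕ Fin s ≃ Fin (s + 1) := Fintype.equivOfCardEq (by simp; omega)
      have hGH : ((1 : Matrix (Fin (s + 1)) (Fin (s + 1)) F).submatrix id e)
          * ((1 : Matrix (Fin (s + 1)) (Fin (s + 1)) F).submatrix e id) = 1 := by
        rw [submatrix_mul_equiv, Matrix.mul_one, submatrix_id_id]
      have hHG : ((1 : Matrix (Fin (s + 1)) (Fin (s + 1)) F).submatrix e id)
          * ((1 : Matrix (Fin (s + 1)) (Fin (s + 1)) F).submatrix id e) = 1 := by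
        rw [← submatrix_mul _ _ _ _ _ Function.bijective_id, Matrix.mul_one, submatrix_one_equiv]
      rw [altSum_congr _ M hGH hHG]
      set G := (1 : Matrix (Fin (s + 1)) (Fin (s + 1)) F).submatrix id e
      set N := Gᵀ * M * G with hN
      have hNs : border (borderVec N) (N.toBlocks₂₂ - N.toBlocks₂₂ᵀ) = border 0 0 := by
        rw [← sub_transpose_eq_border]
        have : N - Nᵀ = Gᵀ * (M - Mᵀ) * G := by
          simp [hN, Matrix.mul_sub, Matrix.sub_mul, Matrix.mul_assoc]
        rw [this, h0]
        ext (_ | i) (_ | j) <;> simp [border]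
      obtain ⟨hv, hs⟩ := border_injective hNs
      rw [altSum_border_symm hχ _ N hv]
      simp only [Nat.card_eq_fintype_card, Fintype.card_fin]
      have ih' := ih s (Nat.lt_succ_self s) N.toBlocks₂₂
      rw [hs] at ih'
      simp only [rank_zero, Nat.zero_div, Nat.sub_zero] at ih' ⊢
      obtain ⟨n, rfl | rfl⟩ := Nat.even_or_odd' s
      · have e1 : (2 * n + 1) / 2 = n := by omega
        have e2 : (2 * n + 1 + 1) / 2 = n + 1 := by omega
        have e3 : 2 * n / 2 = n := by omega
        simp only [e1, e2, e3] at hj ih' ⊢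
        rw [altSum_ext _ (ψ := fun r => (((Fintype.card F ^ 2 : ℕ) : ℂ) ^ (n - j)) *
          (gaussNat (Fintype.card F ^ 2) (n - r / 2) j : ℂ)), altSum_smul, ih' j hj]
        · rcases Nat.eq_zero_or_pos n with rfl | hn
          · simp
          · have : 2 * (n + 1) - 1 = 2 + (2 * n - 1) := by omega
            rw [this, pow_add, mul_pow]
            push_cast
            ring
        · intro i hi
          have := gauss_odd_reduction hb (n := n) (i := i) (j := j) (by omega) hj
          have e4 : (2 * i + 2) / 2 = i + 1 := by omega
          have e5 : (2 * i) / 2 = i := by omega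
          simp only [hpow]
          rw [e4, e5, this]
      · have e1 : (2 * n + 1 + 1) / 2 = n + 1 := by omega
        have e2 : (2 * n + 1 + 1 + 1) / 2 = n + 1 := by omega
        have e3 : (2 * n + 1) / 2 = n := by omega
        have e6 : 2 * (n + 1) - 1 = 2 * n + 1 := by omega
        simp only [e1, e2, e3, e6] at hj ih' ⊢
        cases j with
        | zero =>
          rw [altSum_ext _ (ψ := fun r => ((Fintype.card F : ℂ) ^ (2 * n + 1)) *
            (gaussNat (Fintype.card F ^ 2) (n - r / 2) 0 : ℂ)), altSum_smul, ih' 0 (by omega)]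
          · simp
            ring
          · intro i hi
            simp
        | succ j =>
          rw [altSum_ext _ (ψ := fun r => (((Fintype.card F ^ 2 : ℕ) : ℂ) ^ (n - j)) *
            (gaussNat (Fintype.card F ^ 2) (n - r / 2) j : ℂ) + ((Fintype.card F : ℂ) ^ (2 * n + 1))
            * (gaussNat (Fintype.card F ^ 2) (n - r / 2) (j + 1) : ℂ)), altSum_linear,
            ih' j (by omega)]
          · rcases Nat.lt_or_ge j n with hjn | hjn
            · rw [ih' (j + 1) (by omega)]
              obtain ⟨l, rfl⟩ := Nat.exists_eq_add_of_lt hjn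
              have e4 : j + l + 1 - j = l + 1 := by omega
              have e5 : j + l + 1 - (j + 1) = l := by omega
              have e7 : j + l + 1 + 1 - (j + 1) = l + 1 := by omega
              rw [e4, e5, e7, gaussNat.succ_succ _ (j + l + 1) l]
              push_cast
              ring
            · obtain rfl : j = n := by omega
              rw [altSum_ext _ (φ := fun r => (gaussNat (Fintype.card F ^ 2) (j - r / 2) (j + 1) : ℂ))
                (ψ := fun r => 0 * (fun _ => 0 : ℕ → ℂ) r), altSum_smul]
              · simp
              · intro i hi
                simp [gaussNat.eq_zero_of_lt _ (by omega : j - i < j + 1)]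
          · intro i hi
            have := gauss_sub_mul hb (n := n) (i := i) (j := j) (by omega) (by omega)
            rw [show 2 * i / 2 = i by omega, ← this, show (2 * i + 2) / 2 = i + 1 by omega, hpow,
              Nat.add_sub_add_right]
            ring
  · obtain ⟨s, rfl, G, H, h, D, hGH, hHG, hh, hD, hG⟩ :=
      exists_hyperbolic (sub_transpose_mem M) h0
    have hrank : (M - Mᵀ).rank = D.rank + 2 := by
      rw [← rank_hyperbolic hD hh, ← hG]
      have := rank_congr (A := M - Mᵀ) (G := Gᵀ) (H := Hᵀ)
        (by rw [← transpose_mul, hGH, transpose_one])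
      rw [← this, transpose_transpose]
    rw [altSum_congr _ M hGH hHG]
    set N := Gᵀ * M * G with hN
    have hNs : border (borderVec N) (N.toBlocks₂₂ - N.toBlocks₂₂ᵀ)
        = border (Sum.elim (fun _ => h) 0) (border 0 D) := by
      rw [← sub_transpose_eq_border, ← hG]
      simp [hN, Matrix.mul_sub, Matrix.sub_mul, Matrix.mul_assoc]
    obtain ⟨hv, hs⟩ := border_injective hNs
    rw [sub_transpose_eq_border] at hs
    obtain ⟨-, hs⟩ := border_injective hs
    rw [altSum_hyperbolic hχ _ N hh hv, hrank]
    have ih' := ih s (by omega) N.toBlocks₂₂.toBlocks₂₂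
    rw [hs] at ih'
    have e1 : (s + 2) / 2 = s / 2 + 1 := by omega
    have e2 : ∀ r, (r + 2) / 2 = r / 2 + 1 := by omega
    simp only [Nat.card_eq_fintype_card, e2, Nat.add_sub_add_right] at hj ⊢
    cases j with
    | zero =>
      rw [altSum_ext _ (ψ := fun r => 0 * (fun _ => 0 : ℕ → ℂ) r), altSum_smul]
      · simp [gaussNat.eq_zero_of_lt _ (by omega : s / 2 - D.rank / 2 < s / 2 + 1)]
      · simp
    | succ j =>
      rw [altSum_ext _ (ψ := fun r => (((Fintype.card F ^ 2 : ℕ) : ℂ) ^ (s / 2 - j)) *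
          (gaussNat (Fintype.card F ^ 2) (s / 2 - r / 2) j : ℂ)), altSum_smul,
          ih' j (by omega), Nat.add_sub_add_right]
      · rcases Nat.eq_zero_or_pos s with rfl | hn
        · simp
        · have : 2 * ((s + 1) / 2 + 1) - 1 = 2 + (2 * ((s + 1) / 2) - 1) := by omega
          rw [this, pow_add, mul_pow]
          push_cast
          ring
      · intro i hi
        have := gauss_sub_mul hb (n := s / 2) (i := i) (j := j) hi (by omega)
        rw [show 2 * i / 2 = i by omega, ← this, hpow]

end Transform
end AltMatrix

lemma gaussNat.symm {b : ℕ} (hb : 1 < b) {n j : ℕ} (hj : j ≤ n) :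
    gaussNat b n (n - j) = gaussNat b n j := by
  obtain ⟨a, rfl⟩ := Nat.exists_eq_add_of_le hj
  have h1 := gaussNat.eq_div hb a j
  have h2 := gaussNat.eq_div hb j a
  rw [Nat.add_sub_cancel_left]
  rw [add_comm a j, mul_comm] at h1
  exact_mod_cast h2.trans h1.symm

namespace AltMatrix

open Matrix

section Duality

variable {F : Type*} [Field F]

lemma rank_eq_zero_iff {m ι : Type*} [Finite m] [Fintype ι] {A : Matrix m ι F} :
    A.rank = 0 ↔ A = 0 := by
  classical
  have := Fintype.ofFinite m
  rw [Matrix.rank, Submodule.finrank_eq_zero, LinearMap.range_eq_bot, ← toLin'_apply',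
    map_eq_zero_iff _ toLin'.injective]

variable [Fintype F] {χ : AddChar F ℂ}

/-- Poisson summation for a code of alternating matrices and its trace dual. -/
lemma card_orthogonal_mul_sum {ι : Type*} [Fintype ι] (hχ : χ ≠ 1)
    {C : Submodule F (Matrix ι ι F)} (hC : C ≤ alt F ι) (φ : ℕ → ℂ) :
    (Nat.card ((pairing F ι).orthogonal C) : ℂ) * ∑ A : C, φ A.1.rank
      = ∑ M : (pairing F ι).orthogonal C, altSum χ φ M.1 := by
  classical
  have key (A : Matrix ι ι F) :
      ∑ M : (pairing F ι).orthogonal C, χ (pairing F ι A M)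
        = if A ∈ C then (Nat.card ((pairing F ι).orthogonal C) : ℂ) else 0 := by
    have hA : (∀ M ∈ (pairing F ι).orthogonal C, pairing F ι A M = 0) ↔ A ∈ C := by
      conv_rhs => rw [← LinearMap.BilinForm.orthogonal_orthogonal pairing_nondegenerate
        pairing_isSymm.isRefl C]
      exact forall₂_congr fun M _ => by rw [pairing_isSymm.eq]
    rw [sum_char_submodule hχ]
    simp only [hA]
  simp only [altSum]
  rw [Finset.sum_comm]
  simp only [← Finset.sum_mul, key, ite_mul, zero_mul]
  rw [← Finset.sum_filter, Finset.mul_sum]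
  refine (Finset.sum_bij' (fun A _ => (⟨A.1, by simp_all⟩ : C))
    (fun A _ => ⟨A.1, hC A.2⟩) ?_ ?_ ?_ ?_ ?_).symm
  all_goals simp

/-- The rank moments of a code of alternating matrices and of its trace dual. -/
theorem card_orthogonal_mul_sum_gauss {t : ℕ} {C : Submodule F (Matrix (Fin t) (Fin t) F)}
    (hC : C ≤ alt F (Fin t)) {j : ℕ} (hj : j ≤ t / 2) :
    Nat.card ((pairing F (Fin t)).orthogonal C)
        * ∑ A : C, gaussNat (Fintype.card F ^ 2) (t / 2 - A.1.rank / 2) j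
      = (Fintype.card F ^ (2 * ((t + 1) / 2) - 1)) ^ (t / 2 - j)
        * ∑ M : (pairing F (Fin t)).orthogonal C,
          gaussNat (Fintype.card F ^ 2) (t / 2 - (M.1 - M.1ᵀ).rank / 2) (t / 2 - j) := by
  obtain ⟨χ, hχ⟩ := AddChar.exists_apply_ne_zero.2 (one_ne_zero (α := F))
  have hχ : χ ≠ 1 := AddChar.ne_one_iff.2 ⟨_, hχ⟩
  have := card_orthogonal_mul_sum hχ hC
    (fun r => (gaussNat (Fintype.card F ^ 2) (t / 2 - r / 2) j : ℂ))
  simp only [altSum_gauss hχ t _ j hj] at this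
  rw [Finset.mul_sum _ _ (_ ^ _)]
  apply Nat.cast_injective (R := ℂ)
  simpa only [Nat.cast_mul, Nat.cast_sum] using this

/-- The rank moments of a code of alternating matrices attaining the Singleton bound. -/
theorem sum_gauss_of_card_eq {t k : ℕ} {C : Submodule F (Matrix (Fin t) (Fin t) F)}
    (hC : C ≤ alt F (Fin t)) (hk : k ≤ t / 2)
    (hmin : ∀ A ∈ C, A ≠ 0 → 2 * (t / 2 - k + 1) ≤ A.rank)
    (hcard : Nat.card C = (Fintype.card F ^ (2 * ((t + 1) / 2) - 1)) ^ k) {j : ℕ} (hj : j ≤ k) :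
    ∑ A : C, gaussNat (Fintype.card F ^ 2) (t / 2 - A.1.rank / 2) j
      = (Fintype.card F ^ (2 * ((t + 1) / 2) - 1)) ^ (k - j)
        * gaussNat (Fintype.card F ^ 2) (t / 2) j := by
  classical
  have hb : 1 < Fintype.card F ^ 2 := Nat.one_lt_pow two_ne_zero Fintype.one_lt_card
  have hc : 0 < Fintype.card F ^ (2 * ((t + 1) / 2) - 1) := pow_pos Fintype.card_pos _
  set b := Fintype.card F ^ 2
  set c := Fintype.card F ^ (2 * ((t + 1) / 2) - 1)
  set n := t / 2
  set P := (pairing F (Fin t)).orthogonal C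
  have key : ∀ j ≤ n, Nat.card P * ∑ A : C, gaussNat b (n - A.1.rank / 2) j
      = c ^ (n - j) * ∑ M : P, gaussNat b (n - (M.1 - M.1ᵀ).rank / 2) (n - j) :=
    fun j hj => card_orthogonal_mul_sum_gauss hC hj
  set s : ℕ := (Finset.univ.filter fun M : P => M.1 - M.1ᵀ = 0).card with hs
  have hspos : 0 < s := Finset.card_pos.2 ⟨0, by simp⟩
  have hrank (M : P) (hM : M.1 - M.1ᵀ ≠ 0) : 1 ≤ (M.1 - M.1ᵀ).rank / 2 := by
    obtain ⟨i, -, hi⟩ := exists_rank_eq (sub_transpose_mem M.1)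
    have : (M.1 - M.1ᵀ).rank ≠ 0 := by rwa [Ne, rank_eq_zero_iff]
    omega
  have hsplit (j : ℕ) : ∑ M : P, gaussNat b (n - (M.1 - M.1ᵀ).rank / 2) j
      = s * gaussNat b n j + ∑ M ∈ Finset.univ.filter fun M : P => ¬ M.1 - M.1ᵀ = 0,
        gaussNat b (n - (M.1 - M.1ᵀ).rank / 2) j := by
    rw [← Finset.sum_filter_add_sum_filter_not _ fun M : P => M.1 - M.1ᵀ = 0]
    congr 1
    rw [Finset.sum_congr rfl (g := fun _ => gaussNat b n j), Finset.sum_const, smul_eq_mul]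
    intro M hM
    rw [(Finset.mem_filter.1 hM).2]
    simp
  have hP : Nat.card P = c ^ (n - k) * s := by
    have h0 := key 0 (Nat.zero_le _)
    rw [hsplit, Finset.sum_eq_zero (s := Finset.univ.filter fun M : P => ¬ M.1 - M.1ᵀ = 0)] at h0
    · simp only [gaussNat.zero_right, gaussNat.self, Finset.sum_const, Finset.card_univ,
        smul_eq_mul, mul_one, Nat.sub_zero, add_zero, ← Nat.card_eq_fintype_card (α := C),
        hcard] at h0
      apply Nat.eq_of_mul_eq_mul_right (pow_pos hc k)
      rw [h0, mul_right_comm, ← pow_add, Nat.sub_add_cancel hk]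
    · intro M hM
      have := hrank M (Finset.mem_filter.1 hM).2
      have hn : (M.1 - M.1ᵀ).rank ≤ t := rank_le_width _
      exact gaussNat.eq_zero_of_lt b (by omega)
  have hzero : ∑ A : C, gaussNat b (n - A.1.rank / 2) k = gaussNat b n k := by
    rw [Finset.sum_eq_single 0]
    · simp
    · intro A _ hA
      have := hmin A.1 A.2 (by simpa using hA)
      have hn : A.1.rank ≤ t := rank_le_width _
      exact gaussNat.eq_zero_of_lt b (by omega)
    · simp
  have hvanish : ∀ M : P, M.1 - M.1ᵀ ≠ 0 → k < (M.1 - M.1ᵀ).rank / 2 := by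
    have h1 := key k hk
    rw [hzero, hP, hsplit, gaussNat.symm hb hk, mul_assoc] at h1
    have h2 := Nat.eq_of_mul_eq_mul_left (pow_pos hc _) h1
    have h3 := Nat.left_eq_add.1 h2
    intro M hM
    have h4 := Finset.sum_eq_zero_iff.1 h3 M (by simpa using hM)
    by_contra! h5
    exact (gaussNat.pos_of_le b (by omega : n - k ≤ n - (M.1 - M.1ᵀ).rank / 2)).ne' h4
  have h1 := key j (hj.trans hk)
  rw [hsplit, Finset.sum_eq_zero (s := Finset.univ.filter fun M : P => ¬ M.1 - M.1ᵀ = 0),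
    add_zero, hP, gaussNat.symm hb (hj.trans hk),
    show n - j = (n - k) + (k - j) by omega, pow_add] at h1
  · apply Nat.eq_of_mul_eq_mul_left (Nat.mul_pos (pow_pos hc (n - k)) hspos)
    rw [h1]
    ring
  · intro M hM
    have h1 := hvanish M (Finset.mem_filter.1 hM).2
    have hn : (M.1 - M.1ᵀ).rank ≤ t := rank_le_width _
    exact gaussNat.eq_zero_of_lt b (by omega)

end Duality
end AltMatrix

namespace gaussNat

variable {b : ℕ}

lemma mul_comm_middle (hb : 1 < b) (x y z : ℕ) :
    (gaussNat b (x + y) x : ℝ) * gaussNat b (x + y + z) (x + y)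
      = gaussNat b (y + z) z * gaussNat b (x + y + z) (y + z) := by
  have hx := fact_ne_zero hb x
  have hy := fact_ne_zero hb y
  have hz := fact_ne_zero hb z
  have hxy := fact_ne_zero hb (x + y)
  have hyz := fact_ne_zero hb (y + z)
  have h1 := eq_div hb y x
  have h2 := eq_div hb z (x + y)
  have h3 := eq_div hb x (y + z)
  rw [add_comm y x] at h1
  rw [add_comm z (x + y)] at h2
  rw [← add_assoc] at h3
  rw [h1, h2, h3, eq_div hb y z]
  field_simp

lemma trinomial (hb : 1 < b) (s N l : ℕ) :
    (gaussNat b (s + l) s : ℝ) * gaussNat b (s + N) (s + l)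
      = gaussNat b (s + N) s * gaussNat b N l := by
  rcases le_or_gt l N with h | h
  · obtain ⟨y, rfl⟩ := Nat.exists_eq_add_of_le h
    have hs := fact_ne_zero hb s
    have hl := fact_ne_zero hb l
    have hy := fact_ne_zero hb y
    have hsl := fact_ne_zero hb (s + l)
    have hly := fact_ne_zero hb (l + y)
    have h1 := eq_div hb l s
    have h2 := eq_div hb y (s + l)
    have h3 := eq_div hb (l + y) s
    have h4 := eq_div hb y l
    rw [add_comm l s] at h1
    rw [add_comm y (s + l), add_assoc] at h2
    rw [add_comm (l + y) s] at h3
    rw [add_comm y l] at h4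
    rw [h1, h2, h3, h4]
    field_simp
  · rw [eq_zero_of_lt b h, eq_zero_of_lt b (by omega : s + N < s + l)]
    simp

/-- Gaussian inversion. -/
lemma inversion (hb : 1 < b) {N : ℕ} {f g : ℕ → ℝ}
    (h : ∀ j ≤ N, ∑ s ∈ Finset.range (N + 1), (gaussNat b s j : ℝ) * f s = g j)
    {s : ℕ} (hs : s ≤ N) :
    f s = ∑ l ∈ Finset.range (N - s + 1),
      (-1 : ℝ) ^ l * (b : ℝ) ^ (l.choose 2) * gaussNat b (s + l) s * g (s + l) := by
  have hl : ∀ l ∈ Finset.range (N - s + 1),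
      (-1 : ℝ) ^ l * (b : ℝ) ^ (l.choose 2) * gaussNat b (s + l) s * g (s + l)
        = ∑ u ∈ Finset.range (N + 1), (-1 : ℝ) ^ l * (b : ℝ) ^ (l.choose 2)
          * gaussNat b (s + l) s * (gaussNat b u (s + l) * f u) := fun l hl => by
    rw [← h (s + l) (by have := Finset.mem_range.1 hl; omega), Finset.mul_sum]
  rw [Finset.sum_congr rfl hl, Finset.sum_comm, Finset.sum_eq_single s]
  · rw [Finset.sum_eq_single 0]
    · simp
    · intro l _ hl
      simp [eq_zero_of_lt b (by omega : s < s + l)]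
    · simp
  · intro u hu hus
    rcases lt_or_gt_of_ne hus with hlt | hlt
    · exact Finset.sum_eq_zero fun l _ => by simp [eq_zero_of_lt b (by omega : u < s + l)]
    · obtain ⟨x, rfl⟩ := Nat.exists_eq_add_of_lt hlt
      have hx := alternating_sum b (x + 1)
      rw [if_neg (Nat.succ_ne_zero x)] at hx
      have hsub : Finset.range (x + 1 + 1) ⊆ Finset.range (N - s + 1) :=
        Finset.range_subset_range.2 (by have := Finset.mem_range.1 hu; omega)
      rw [Finset.sum_subset hsub fun l _ hl => by
        rw [eq_zero_of_lt b (by simpa [Finset.mem_range] using hl : x + 1 < l)]; simp] at hx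
      calc _ = (gaussNat b (s + (x + 1)) s * f (s + x + 1)) * ∑ l ∈ Finset.range (N - s + 1),
          (-1 : ℝ) ^ l * (b : ℝ) ^ (l.choose 2) * gaussNat b (x + 1) l := by
            rw [Finset.mul_sum]
            refine Finset.sum_congr rfl fun l _ => ?_
            have := trinomial hb s (x + 1) l
            rw [← add_assoc] at this ⊢
            linear_combination ((-1 : ℝ) ^ l * (b : ℝ) ^ (l.choose 2) * f (s + x + 1)) * this
        _ = 0 := by rw [hx, mul_zero]
  · intro hu
    exact absurd (Finset.mem_range.2 (by omega)) hu

lemma gaussQ_natCast {q : ℕ} (hq : 1 < q) (x k : ℕ) :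
    gaussQ q x k = gaussNat (q ^ 2) x k := by
  have hpow (a : ℕ) : (q : ℝ) ^ (2 * (a : ℝ)) = ((q ^ 2 : ℕ) : ℝ) ^ a := by
    rw [← Nat.cast_two, ← Nat.cast_mul, Real.rpow_natCast, pow_mul, Nat.cast_pow]
  simp only [gaussQ, hpow]
  rw [Finset.prod_div_distrib, ← mul_prod, mul_div_assoc, div_self, mul_one]
  refine Finset.prod_ne_zero_iff.2 fun i hi => sub_ne_zero.2 ?_
  exact (pow_lt_pow_right₀ (by exact_mod_cast Nat.one_lt_pow two_ne_zero hq)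
    (Finset.mem_range.1 hi)).ne'

end gaussNat

/-- The skew rank weight distribution of a linear MSRD code attaining the Singleton bound. -/
theorem stmt19 (q : ℕ) (hq : IsPrimePow q) (F : Type*) [Field F] [Fintype F]
    (hF : Fintype.card F = q) (t : ℕ) (ht : 2 ≤ t) (n m : ℕ)
    (hn : n = t / 2) (hm : m = t * (t - 1) / (2 * n))
    (𝒞 : Submodule F (Matrix (Fin t) (Fin t) F))
    (h𝒞 : ∀ A ∈ 𝒞, A.transpose = -A ∧ ∀ i, A i i = 0)
    (c : ℕ → ℕ)
    (hc : ∀ i, c i = Nat.card {A : Matrix (Fin t) (Fin t) F // A ∈ 𝒞 ∧ A.rank = 2 * i})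
    (d : ℕ) (hd1 : 1 ≤ d) (hd2 : d ≤ n)
    (hmin : ∀ A ∈ 𝒞, A ≠ 0 → 2 * d ≤ A.rank)
    (hMSRD : Nat.card 𝒞 = q ^ (m * (n - d + 1))) :
    c 0 = 1 ∧ (∀ i, 1 ≤ i → i ≤ d - 1 → c i = 0) ∧
    ∀ r ≤ n - d, (c (d + r) : ℝ)
      = ∑ i ∈ Finset.range (r + 1),
          (-1 : ℝ) ^ (r - i) * (q : ℝ) ^ ((r - i) * (r - i - 1)) *
            gaussQ (q : ℝ) ((d + r : ℕ) : ℝ) (d + i) * gaussQ (q : ℝ) (n : ℝ) (d + r) *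
            ((q : ℝ) ^ (m * (i + 1)) - 1) := by
  classical
  have hq1 : 1 < q := hq.one_lt
  have hb : 1 < q ^ 2 := Nat.one_lt_pow two_ne_zero hq1
  have hm' : m = 2 * ((t + 1) / 2) - 1 := by
    obtain ⟨a, rfl | rfl⟩ := Nat.even_or_odd' t
    · have e1 : n = a := by omega
      have e2 : 2 * ((2 * a + 1) / 2) - 1 = 2 * a - 1 := by omega
      rw [hm, e1, e2, Nat.mul_div_cancel_left _ (by omega)]
    · have e1 : n = a := by omega
      have e2 : 2 * ((2 * a + 1 + 1) / 2) - 1 = 2 * a + 1 := by omega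
      rw [hm, e1, e2, Nat.add_sub_cancel, Nat.mul_div_cancel _ (by omega)]
  have hc0 : c 0 = 1 := by
    rw [hc, Nat.card_eq_one_iff_unique]
    refine ⟨⟨fun A B => Subtype.ext ?_⟩, ⟨⟨0, 𝒞.zero_mem, by simp⟩⟩⟩
    rw [AltMatrix.rank_eq_zero_iff.1 A.2.2, AltMatrix.rank_eq_zero_iff.1 B.2.2]
  have hci : ∀ i, 1 ≤ i → i ≤ d - 1 → c i = 0 := by
    intro i hi1 hi2
    rw [hc, Nat.card_eq_zero]
    refine Or.inl ⟨fun A => ?_⟩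
    have hA := A.2.2
    have := hmin A.1 A.2.1 fun h => by rw [h, Matrix.rank_zero] at hA; omega
    omega
  refine ⟨hc0, hci, fun r hr => ?_⟩
  have hmoment : ∀ j ≤ n - d, ∑ s ∈ Finset.range (n - d + 1),
      (gaussNat (q ^ 2) s j : ℝ) * (c (n - s) : ℝ)
        = gaussNat (q ^ 2) n j * ((q : ℝ) ^ (m * (n - d + 1 - j)) - 1) := by
    intro j hj
    have h1 := AltMatrix.sum_gauss_of_card_eq (k := n - d + 1) h𝒞 (by omega)
      (fun A hA hA0 => le_trans (by omega) (hmin A hA hA0))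
      (by rw [hMSRD, hF, ← hm', pow_mul]) (j := j) (by omega)
    rw [hF, ← hn, ← hm', ← pow_mul] at h1
    have h2 : ∑ A : 𝒞, gaussNat (q ^ 2) (n - A.1.rank / 2) j
        = ∑ s ∈ Finset.range (n + 1), gaussNat (q ^ 2) s j * c (n - s) := by
      rw [← Finset.sum_fiberwise_of_maps_to (g := fun A : 𝒞 => n - A.1.rank / 2)
        (t := Finset.range (n + 1)) (fun A _ => Finset.mem_range.2 (by omega))]
      refine Finset.sum_congr rfl fun s hs => ?_
      rw [Finset.sum_congr rfl (g := fun _ => gaussNat (q ^ 2) s j) fun A hA => by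
        rw [(Finset.mem_filter.1 hA).2], Finset.sum_const, smul_eq_mul, mul_comm, hc,
        ← Fintype.card_subtype, ← Nat.card_eq_fintype_card]
      congr 1
      refine Nat.card_congr ⟨fun A => ⟨A.1.1, A.1.2, ?_⟩, fun A => ⟨⟨A.1, A.2.1⟩, ?_⟩,
        fun _ => rfl, fun _ => rfl⟩
      · obtain ⟨i, hi, hr⟩ := AltMatrix.exists_rank_eq (h𝒞 _ A.1.2)
        have := A.2
        omega
      · have := A.2.2
        have := Finset.mem_range.1 hs
        simp only
        omega
    rw [h2, Finset.sum_range_succ, Nat.sub_self, hc0, mul_one,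
      ← Finset.sum_subset (Finset.range_subset_range.2 (by omega : n - d + 1 ≤ n))
        fun s hs hs' => by
          rw [hci _ (by have := Finset.mem_range.1 hs; omega)
            (by have := mt Finset.mem_range.2 hs'; omega), mul_zero]] at h1
    have h3 : (∑ s ∈ Finset.range (n - d + 1), (gaussNat (q ^ 2) s j : ℝ) * (c (n - s) : ℝ))
        + gaussNat (q ^ 2) n j = (q : ℝ) ^ (m * (n - d + 1 - j)) * gaussNat (q ^ 2) n j := by
      exact_mod_cast h1
    linear_combination h3
  have hinv := gaussNat.inversion hb hmoment (s := n - d - r) (by omega)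
  rw [show n - (n - d - r) = d + r by omega, show n - d - (n - d - r) = r by omega,
    ← Finset.sum_range_reflect] at hinv
  rw [hinv]
  refine Finset.sum_congr rfl fun i hi => ?_
  have hir : i ≤ r := Nat.lt_succ_iff.1 (Finset.mem_range.1 hi)
  have hmid := gaussNat.mul_comm_middle hb (n - d - r) (r - i) (d + i)
  rw [show n - d - r + (r - i) + (d + i) = n by omega, show r - i + (d + i) = d + r by omega]
    at hmid
  have hexp : (q : ℝ) ^ ((r - i) * (r - i - 1)) = ((q ^ 2 : ℕ) : ℝ) ^ ((r - i).choose 2) := by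
    rw [Nat.choose_two_right, Nat.cast_pow, ← pow_mul,
      Nat.two_mul_div_two_of_even (Nat.even_mul_pred_self _)]
  rw [gaussNat.gaussQ_natCast hq1, gaussNat.gaussQ_natCast hq1, hexp,
    show r + 1 - 1 - i = r - i by omega,
    show n - d + 1 - (n - d - r + (r - i)) = i + 1 by omega]
  linear_combination ((-1 : ℝ) ^ (r - i) * ((q ^ 2 : ℕ) : ℝ) ^ ((r - i).choose 2)
    * ((q : ℝ) ^ (m * (i + 1)) - 1)) * hmid
end
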